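/- Let n ≥ 1 and n/(n+1) < p ≤ 1, and fix ψ as in the context. There is a constant C = C(n,p,ψ) ≥ 1 such that for every locally integrable f : ℝⁿ → ℝ the following are equivalent: (i) there exist g ∈ L^p(ℝⁿ), g ≥ 0 measurable, and a set E of Lebesgue measure zero such that |f(x) − f(y)| ≤ |x − y|·(g(x) + g(y)) for all x, y ∈ ℝⁿ ∖ E with |x − y| ≤ 1; (ii) for each j ∈ {1,…,n} the truncated maximal function m_ψ(D_j f)(x) := sup_{0<t≤1} t^{−n−1} |∫_{ℝⁿ} f(y)(∂_jψ)((x−y)/t) dy| belongs to L^p(ℝⁿ). Moreover C^{−1}·Σ_j ‖m_ψ(D_j f)‖_{L^p} ≤ inf{‖g‖_{L^p} : g as in (i)} ≤ C·Σ_j ‖m_ψ(D_j f)‖_{L^p}. -/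

import Mathlib

open MeasureTheory Metric Set ENNReal NNReal

noncomputable section

/-- The `L^p` quasinorm (for a positive real exponent `p`) of a real function
with respect to the measure `μ`. -/
def lpNorm (n : ℕ) (p : ℝ) (g : EuclideanSpace ℝ (Fin n) → ℝ)
    (μ : Measure (EuclideanSpace ℝ (Fin n))) : ℝ≥0∞ :=
  (∫⁻ x, ENNReal.ofReal |g x| ^ p ∂μ) ^ (1 / p)

/-- `g` is a local Hajlasz gradient of `u` on `ℝⁿ`: the Hajlasz inequality holds off a
null set for all pairs of points at distance at most `1`. -/
def IsLocalHajlaszGradient (n : ℕ) (u g : EuclideanSpace ℝ (Fin n) → ℝ) : Prop :=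
  Measurable g ∧ (∀ x, 0 ≤ g x) ∧
    ∃ E : Set (EuclideanSpace ℝ (Fin n)), MeasureTheory.volume E = 0 ∧
      ∀ x ∉ E, ∀ y ∉ E, ‖x - y‖ ≤ 1 → |u x - u y| ≤ ‖x - y‖ * (g x + g y)

/-- The truncated smooth maximal function of `D_j f`:
`m_ψ(D_j f)(x) = sup_{0 < t ≤ 1} t^{-n-1} |∫ f(y) (∂_j ψ)((x-y)/t) dy|`. -/
def truncSmoothMax (n : ℕ) (ψ f : EuclideanSpace ℝ (Fin n) → ℝ) (j : Fin n)
    (x : EuclideanSpace ℝ (Fin n)) : ℝ≥0∞ :=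
  ⨆ (t : {s : ℝ // 0 < s ∧ s ≤ 1}),
    ENNReal.ofReal ((t.1⁻¹) ^ (n + 1) *
      |∫ y, f y * fderiv ℝ ψ (t.1⁻¹ • (x - y)) (EuclideanSpace.single j 1)|)

/-- The uncentered Hardy-Littlewood maximal function. -/
def HLMax (n : ℕ) (h : EuclideanSpace ℝ (Fin n) → ℝ≥0∞) (x : EuclideanSpace ℝ (Fin n)) : ℝ≥0∞ :=
  ⨆ (c : EuclideanSpace ℝ (Fin n)) (R : ℝ) (_ : x ∈ ball c R),
    (volume (ball c R))⁻¹ * ∫⁻ y in ball c R, h y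

lemma lt_HLMax_iff {n : ℕ} {h : EuclideanSpace ℝ (Fin n) → ℝ≥0∞} {x : EuclideanSpace ℝ (Fin n)}
    {l : ℝ≥0∞} : l < HLMax n h x ↔ ∃ c R, x ∈ ball c R ∧
      l < (volume (ball c R))⁻¹ * ∫⁻ y in ball c R, h y := by
  simp only [HLMax, lt_iSup_iff]
  constructor
  · rintro ⟨c, R, hx, hl⟩; exact ⟨c, R, hx, hl⟩
  · rintro ⟨c, R, hx, hl⟩; exact ⟨c, R, hx, hl⟩

lemma isOpen_lt_HLMax (n : ℕ) (h : EuclideanSpace ℝ (Fin n) → ℝ≥0∞) (l : ℝ≥0∞) :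
    IsOpen {x | l < HLMax n h x} := by
  have : {x | l < HLMax n h x} = ⋃ (c : EuclideanSpace ℝ (Fin n)) (R : ℝ)
      (_ : l < (volume (ball c R))⁻¹ * ∫⁻ y in ball c R, h y), ball c R := by
    ext x
    simp only [mem_setOf_eq, lt_HLMax_iff, mem_iUnion]
    constructor
    · rintro ⟨c, R, hx, hl⟩; exact ⟨c, R, hl, hx⟩
    · rintro ⟨c, R, hl, hx⟩; exact ⟨c, R, hx, hl⟩
  rw [this]
  exact isOpen_iUnion fun c => isOpen_iUnion fun R => isOpen_iUnion fun _ => isOpen_ball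

lemma measurable_HLMax (n : ℕ) (h : EuclideanSpace ℝ (Fin n) → ℝ≥0∞) :
    Measurable (HLMax n h) :=
  measurable_of_Ioi fun l => (isOpen_lt_HLMax n h l).measurableSet

lemma setLIntegral_ball_le_HLMax {n : ℕ} (h : EuclideanSpace ℝ (Fin n) → ℝ≥0∞)
    {x c : EuclideanSpace ℝ (Fin n)} {R : ℝ} (hx : x ∈ ball c R) :
    ∫⁻ y in ball c R, h y ≤ volume (ball c R) * HLMax n h x := by
  have hR : 0 < R := pos_of_mem_ball hx
  have h1 : (volume (ball c R))⁻¹ * ∫⁻ y in ball c R, h y ≤ HLMax n h x :=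
    le_iSup_of_le c (le_iSup_of_le R (le_iSup_of_le hx le_rfl))
  have h0 : volume (ball c R) ≠ 0 := (measure_ball_pos _ _ hR).ne'
  have h2 : volume (ball c R) ≠ ⊤ := measure_ball_lt_top.ne
  calc ∫⁻ y in ball c R, h y
      = volume (ball c R) * ((volume (ball c R))⁻¹ * ∫⁻ y in ball c R, h y) := by
        rw [← mul_assoc, ENNReal.mul_inv_cancel h0 h2, one_mul]
    _ ≤ _ := by gcongr

lemma volume_ball_scale {n : ℕ} (c : EuclideanSpace ℝ (Fin n)) {R : ℝ} (hR : 0 < R) :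
    volume (ball c R) = ENNReal.ofReal (R ^ n) * volume (ball (0 : EuclideanSpace ℝ (Fin n)) 1) := by
  have := Measure.addHaar_ball_of_pos (volume : Measure (EuclideanSpace ℝ (Fin n))) c hR
  simpa using this

lemma HLMax_weak {n : ℕ} (hn : 1 ≤ n) (h : EuclideanSpace ℝ (Fin n) → ℝ≥0∞)
    {l : ℝ≥0∞} (hl : l ≠ 0) (hl' : l ≠ ⊤) :
    l * volume {x | l < HLMax n h x} ≤ ENNReal.ofReal (5 ^ n) * ∫⁻ y, h y := by
  by_cases hfin : ∫⁻ y, h y = ⊤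
  · rw [hfin, ENNReal.mul_top]; · exact le_top
    simp
  set V := volume (ball (0 : EuclideanSpace ℝ (Fin n)) 1) with hV
  have hV0 : V ≠ 0 := (measure_ball_pos _ _ one_pos).ne'
  have hVt : V ≠ ⊤ := measure_ball_lt_top.ne
  let t : Set (EuclideanSpace ℝ (Fin n) × ℝ) :=
    {a | 0 < a.2 ∧ l * volume (ball a.1 a.2) < ∫⁻ y in ball a.1 a.2, h y}
  set T : ℝ := ((∫⁻ y, h y) / (l * V)).toReal with hT
  have hlV : l * V ≠ 0 := mul_ne_zero hl hV0
  have hlV' : l * V ≠ ⊤ := ENNReal.mul_ne_top hl' hVt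
  have hbd : ∀ a ∈ t, a.2 ≤ max 1 T := by
    rintro ⟨c, R⟩ ⟨hR, ha⟩
    simp only at hR ha ⊢
    by_cases hR1 : R ≤ 1
    · exact hR1.trans (le_max_left _ _)
    refine le_trans ?_ (le_max_right _ _)
    have h1 : l * (ENNReal.ofReal (R ^ n) * V) ≤ ∫⁻ y, h y := by
      rw [← volume_ball_scale c hR]
      exact ha.le.trans (setLIntegral_le_lintegral _ _)
    have h2 : ENNReal.ofReal (R ^ n) ≤ (∫⁻ y, h y) / (l * V) := by
      rw [ENNReal.le_div_iff_mul_le (Or.inl hlV) (Or.inl hlV')]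
      calc _ = l * (ENNReal.ofReal (R ^ n) * V) := by ring
        _ ≤ _ := h1
    have h3 : R ^ n ≤ T := by
      rw [hT, ← ENNReal.toReal_ofReal (pow_nonneg hR.le n)]
      exact ENNReal.toReal_mono (ENNReal.div_ne_top hfin hlV) h2
    exact (le_self_pow₀ (not_le.mp hR1).le (by omega)).trans h3
  obtain ⟨u, hut, hdisj, hcov⟩ := Vitali.exists_disjoint_subfamily_covering_enlargement_closedBall
    t (fun a => a.1) (fun a => a.2) (max 1 T) hbd 5 (by norm_num)
  have hdisj' : u.PairwiseDisjoint fun a => ball a.1 a.2 :=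
    hdisj.mono_on fun a _ => ball_subset_closedBall
  have hcount : u.Countable := by
    refine hdisj'.countable_of_isOpen (fun a _ => isOpen_ball) fun a ha => ?_
    exact nonempty_ball.2 (hut ha).1
  have hsub : {x | l < HLMax n h x} ⊆ ⋃ b ∈ u, closedBall b.1 (5 * b.2) := by
    intro x hx
    obtain ⟨c, R, hxc, hlt⟩ := lt_HLMax_iff.1 hx
    have hR : 0 < R := pos_of_mem_ball hxc
    have hat : ((c, R) : EuclideanSpace ℝ (Fin n) × ℝ) ∈ t := by
      refine ⟨hR, ?_⟩
      have h0 : volume (ball c R) ≠ 0 := (measure_ball_pos _ _ hR).ne'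
      have h2 : volume (ball c R) ≠ ⊤ := measure_ball_lt_top.ne
      rw [mul_comm, ← div_eq_mul_inv] at hlt
      exact (ENNReal.lt_div_iff_mul_lt (Or.inl h0) (Or.inl h2)).1 hlt
    obtain ⟨b, hb, hsub⟩ := hcov _ hat
    exact mem_biUnion hb (hsub (ball_subset_closedBall hxc))
  haveI : Nontrivial (EuclideanSpace ℝ (Fin n)) := by
    haveI : Nonempty (Fin n) := ⟨⟨0, by omega⟩⟩
    infer_instance
  calc l * volume {x | l < HLMax n h x}
      ≤ l * volume (⋃ b ∈ u, closedBall b.1 (5 * b.2)) := by gcongr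
    _ ≤ l * ∑' b : u, volume (closedBall b.1.1 (5 * b.1.2)) := by
        gcongr; exact measure_biUnion_le _ hcount _
    _ = ∑' b : u, ENNReal.ofReal (5 ^ n) * (l * volume (ball b.1.1 b.1.2)) := by
        rw [← ENNReal.tsum_mul_left]
        congr 1; ext b
        have hb := (hut b.2).1
        rw [Measure.addHaar_closedBall_eq_addHaar_ball, volume_ball_scale _ (by positivity),
          volume_ball_scale _ hb, mul_pow, ENNReal.ofReal_mul (by positivity)]
        ring
    _ ≤ ∑' b : u, ENNReal.ofReal (5 ^ n) * ∫⁻ y in ball b.1.1 b.1.2, h y := by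
        gcongr with b; exact (hut b.2).2.le
    _ = ENNReal.ofReal (5 ^ n) * ∫⁻ y in ⋃ b ∈ u, ball b.1 b.2, h y := by
        rw [ENNReal.tsum_mul_left, lintegral_biUnion hcount (fun b _ => measurableSet_ball) hdisj']
    _ ≤ _ := by gcongr; exact Measure.restrict_le_self

lemma HLMax_split {n : ℕ} (h : EuclideanSpace ℝ (Fin n) → ℝ≥0∞) (hm : Measurable h)
    (l : ℝ≥0∞) (x : EuclideanSpace ℝ (Fin n)) :
    HLMax n h x ≤ l + HLMax n ({y | l < h y}.indicator h) x := by
  refine iSup_le fun c => iSup_le fun R => iSup_le fun hx => ?_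
  have hR : 0 < R := pos_of_mem_ball hx
  have h0 : volume (ball c R) ≠ 0 := (measure_ball_pos _ _ hR).ne'
  have h2 : volume (ball c R) ≠ ⊤ := measure_ball_lt_top.ne
  have h3 : ∀ y, h y ≤ l + {y | l < h y}.indicator h y := by
    intro y
    by_cases hy : l < h y
    · rw [indicator_of_mem (by exact hy)]; exact le_add_self
    · exact (not_lt.1 hy).trans le_self_add
  calc (volume (ball c R))⁻¹ * ∫⁻ y in ball c R, h y
      ≤ (volume (ball c R))⁻¹ * ∫⁻ y in ball c R, (l + {y | l < h y}.indicator h y) := by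
        gcongr with y; exact h3 y
    _ = l + (volume (ball c R))⁻¹ * ∫⁻ y in ball c R, {y | l < h y}.indicator h y := by
        rw [lintegral_add_left measurable_const, lintegral_const, mul_add]
        simp only [MeasurableSet.univ, Measure.restrict_apply, univ_inter]
        rw [mul_comm l, ← mul_assoc, ENNReal.inv_mul_cancel h0 h2, one_mul]
    _ ≤ _ := by
        gcongr
        exact le_iSup_of_le c (le_iSup_of_le R (le_iSup_of_le hx le_rfl))

/-- One-dimensional layer-cake integral. -/
def layerInt (a : ℝ) (y : ℝ≥0∞) : ℝ≥0∞ :=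
  ∫⁻ t in Ioi (0 : ℝ), {t : ℝ | ENNReal.ofReal t < y}.indicator (fun t => ENNReal.ofReal (t ^ (a - 1))) t

lemma lintegral_Ioo_rpow {a : ℝ} (ha : 0 < a) {Y : ℝ} (hY : 0 ≤ Y) :
    ENNReal.ofReal a * ∫⁻ t in Ioo (0 : ℝ) Y, ENNReal.ofReal (t ^ (a - 1)) = ENNReal.ofReal (Y ^ a) := by
  have h1 : IntervalIntegrable (fun t : ℝ => t ^ (a - 1)) volume 0 Y :=
    intervalIntegral.intervalIntegrable_rpow' (by linarith)
  have h2 := integral_rpow (a := 0) (b := Y) (r := a - 1) (Or.inl (by linarith))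
  rw [restrict_Ioo_eq_restrict_Ioc, ← ofReal_integral_eq_lintegral_ofReal]
  · rw [intervalIntegral.integral_of_le hY] at h2
    rw [h2, ← ENNReal.ofReal_mul ha.le]
    congr 1
    rw [sub_add_cancel, Real.zero_rpow ha.ne']
    field_simp
    ring
  · exact (intervalIntegrable_iff_integrableOn_Ioc_of_le hY).1 h1
  · filter_upwards [ae_restrict_mem measurableSet_Ioc] with t ht
    exact Real.rpow_nonneg ht.1.le _

lemma layerInt_of_ne_top {a : ℝ} (ha : 0 < a) {y : ℝ≥0∞} (hy : y ≠ ⊤) :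
    ENNReal.ofReal a * layerInt a y = y ^ a := by
  have hset : ∀ t ∈ Ioi (0:ℝ), {t : ℝ | ENNReal.ofReal t < y}.indicator
      (fun t => ENNReal.ofReal (t ^ (a - 1))) t
      = (Ioo 0 y.toReal).indicator (fun t => ENNReal.ofReal (t ^ (a - 1))) t := by
    intro t ht
    have : t ∈ {t : ℝ | ENNReal.ofReal t < y} ↔ t ∈ Ioo 0 y.toReal := by
      rw [mem_ofPred_eq, ENNReal.ofReal_lt_iff_lt_toReal (le_of_lt ht) hy]
      exact ⟨fun h => ⟨ht, h⟩, fun h => h.2⟩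
    by_cases h : t ∈ Ioo 0 y.toReal
    · rw [indicator_of_mem h, indicator_of_mem (this.2 h)]
    · rw [indicator_of_notMem h, indicator_of_notMem (fun h' => h (this.1 h'))]
  rw [layerInt, setLIntegral_congr_fun measurableSet_Ioi hset,
    lintegral_indicator measurableSet_Ioo, Measure.restrict_restrict measurableSet_Ioo,
    inter_eq_left.2 (fun t ht => ht.1), lintegral_Ioo_rpow ha ENNReal.toReal_nonneg,
    ← ENNReal.ofReal_rpow_of_nonneg ENNReal.toReal_nonneg ha.le, ENNReal.ofReal_toReal hy]

lemma layerInt_mono {a : ℝ} {y z : ℝ≥0∞} (h : y ≤ z) : layerInt a y ≤ layerInt a z := by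
  refine lintegral_mono fun t => indicator_le_indicator_of_subset (fun t ht => ?_) (fun _ => zero_le) t
  rw [mem_ofPred_eq] at ht ⊢; exact lt_of_lt_of_le ht h

lemma layerInt_eq {a : ℝ} (ha : 0 < a) (y : ℝ≥0∞) :
    ENNReal.ofReal a * layerInt a y = y ^ a := by
  by_cases hy : y = ⊤
  · rw [hy, ENNReal.top_rpow_of_pos ha]
    refine ENNReal.eq_top_of_forall_nnreal_le fun r => ?_
    calc (r : ℝ≥0∞) = ((r : ℝ≥0∞) ^ (1 / a)) ^ a := by
          rw [← ENNReal.rpow_mul, one_div_mul_cancel ha.ne', ENNReal.rpow_one]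
      _ = _ := (layerInt_of_ne_top ha (ENNReal.rpow_ne_top_of_nonneg (by positivity) (by simp))).symm
      _ ≤ _ := by gcongr; exact layerInt_mono le_top
  · exact layerInt_of_ne_top ha hy

lemma HLMax_strong {n : ℕ} (hn : 1 ≤ n) {s : ℝ} (hs : 1 < s) :
    ∃ C : ℝ≥0∞, C ≠ ⊤ ∧ ∀ h : EuclideanSpace ℝ (Fin n) → ℝ≥0∞, Measurable h →
      ∫⁻ x, HLMax n h x ^ s ≤ C * ∫⁻ x, h x ^ s := by
  have hs0 : 0 < s := by linarith
  have hs1 : 0 < s - 1 := by linarith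
  refine ⟨2 ^ s * (ENNReal.ofReal s * (ENNReal.ofReal (5 ^ n) * (ENNReal.ofReal (s - 1))⁻¹)), ?_, ?_⟩
  · refine ENNReal.mul_ne_top (ENNReal.rpow_ne_top_of_nonneg hs0.le (by simp))
      (ENNReal.mul_ne_top (by simp) (ENNReal.mul_ne_top (by simp) ?_))
    simp [hs]
  intro h hm
  have hM := measurable_HLMax n h
  have key : ∀ t ∈ Ioi (0:ℝ), ENNReal.ofReal (t ^ (s - 1)) * volume {x | ENNReal.ofReal t < HLMax n h x / 2}
      ≤ ENNReal.ofReal (5 ^ n) * (ENNReal.ofReal (t ^ (s - 1 - 1)) * ∫⁻ x, {y | ENNReal.ofReal t < h y}.indicator h x) := by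
    intro t ht
    have ht : 0 < t := ht
    have hw := HLMax_weak hn ({y | ENNReal.ofReal t < h y}.indicator h) (l := ENNReal.ofReal t)
      (by simp [ht]) (by simp)
    have hsub : {x | ENNReal.ofReal t < HLMax n h x / 2} ⊆
        {x | ENNReal.ofReal t < HLMax n ({y | ENNReal.ofReal t < h y}.indicator h) x} := by
      intro x hx
      rw [mem_ofPred_eq] at hx ⊢
      have h1 := HLMax_split h hm (ENNReal.ofReal t) x
      have h2 : ENNReal.ofReal t * 2 < HLMax n h x :=
        (ENNReal.lt_div_iff_mul_lt (Or.inl (by simp)) (Or.inl (by simp))).1 hx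
      have h3 := h2.trans_le h1
      rw [mul_two] at h3
      exact (ENNReal.add_lt_add_iff_left (by simp)).1 h3
    have e : t ^ (s - 1) = t ^ (s - 1 - 1) * t := by
      rw [Real.rpow_sub_one ht.ne' (s - 1)]; field_simp
    calc _ = ENNReal.ofReal (t ^ (s - 1 - 1)) * (ENNReal.ofReal t *
            volume {x | ENNReal.ofReal t < HLMax n h x / 2}) := by
          rw [e, ENNReal.ofReal_mul (by positivity), mul_assoc]
      _ ≤ ENNReal.ofReal (t ^ (s - 1 - 1)) * (ENNReal.ofReal t *
            volume {x | ENNReal.ofReal t < HLMax n ({y | ENNReal.ofReal t < h y}.indicator h) x}) := by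
          gcongr
      _ ≤ ENNReal.ofReal (t ^ (s - 1 - 1)) * (ENNReal.ofReal (5 ^ n) * ∫⁻ x, {y | ENNReal.ofReal t < h y}.indicator h x) := by gcongr
      _ = _ := by ring
  -- Tonelli for a general function
  have ton : ∀ (N w : EuclideanSpace ℝ (Fin n) → ℝ≥0∞) (a : ℝ), Measurable N → Measurable w →
      ∫⁻ x, w x * layerInt a (N x) = ∫⁻ t in Ioi (0:ℝ), ENNReal.ofReal (t ^ (a - 1)) *
        ∫⁻ x, {x | ENNReal.ofReal t < N x}.indicator w x := by
    intro N w a hN hw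
    have hmeas : Measurable (Function.uncurry fun (x : EuclideanSpace ℝ (Fin n)) (t : ℝ) =>
        w x * {t : ℝ | ENNReal.ofReal t < N x}.indicator (fun t => ENNReal.ofReal (t ^ (a - 1))) t) := by
      have : (Function.uncurry fun (x : EuclideanSpace ℝ (Fin n)) (t : ℝ) =>
        w x * {t : ℝ | ENNReal.ofReal t < N x}.indicator (fun t => ENNReal.ofReal (t ^ (a - 1))) t)
        = fun z => w z.1 * {z : EuclideanSpace ℝ (Fin n) × ℝ | ENNReal.ofReal z.2 < N z.1}.indicator
          (fun z => ENNReal.ofReal (z.2 ^ (a - 1))) z := by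
        ext ⟨x, t⟩
        simp [Function.uncurry, indicator]
      rw [this]
      refine (hw.comp measurable_fst).mul (Measurable.indicator ?_ ?_)
      · fun_prop
      · exact measurableSet_lt (by fun_prop) (hN.comp measurable_fst)
    calc ∫⁻ x, w x * layerInt a (N x)
        = ∫⁻ x, ∫⁻ t in Ioi (0:ℝ), w x * {t : ℝ | ENNReal.ofReal t < N x}.indicator (fun t => ENNReal.ofReal (t ^ (a - 1))) t := by
          congr 1; ext x
          rw [layerInt, lintegral_const_mul]
          refine Measurable.indicator (by fun_prop) (measurableSet_lt (by fun_prop) measurable_const)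
      _ = ∫⁻ t in Ioi (0:ℝ), ∫⁻ x, w x * {t : ℝ | ENNReal.ofReal t < N x}.indicator (fun t => ENNReal.ofReal (t ^ (a - 1))) t :=
          lintegral_lintegral_swap hmeas.aemeasurable
      _ = _ := by
          congr 1; ext t
          rw [← lintegral_const_mul]
          · congr 1; ext x
            by_cases hx : ENNReal.ofReal t < N x
            · simp [indicator, hx, mul_comm]
            · simp [indicator, hx]
          · exact hw.indicator (measurableSet_lt measurable_const hN)
  have h1 : ∀ x, HLMax n h x ^ s = 2 ^ s * (ENNReal.ofReal s * layerInt s (HLMax n h x / 2)) := by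
    intro x
    rw [layerInt_eq hs0, ← ENNReal.mul_rpow_of_nonneg _ _ hs0.le, ENNReal.mul_div_cancel (by simp) (by simp)]
  have hN : Measurable fun x => HLMax n h x / 2 := hM.div_const 2
  have hfin : ∫⁻ x, HLMax n h x ^ s = 2 ^ s * (ENNReal.ofReal s * ∫⁻ x, layerInt s (HLMax n h x / 2)) := by
    have hlm : Measurable fun x => layerInt s (HLMax n h x / 2) := by
      have : (fun x => layerInt s (HLMax n h x / 2)) = fun x => (ENNReal.ofReal s)⁻¹ * (HLMax n h x / 2) ^ s := by
        ext x
        rw [← layerInt_eq hs0, ← mul_assoc, ENNReal.inv_mul_cancel (by simp [hs0]) (by simp), one_mul]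
      rw [this]
      exact (hN.pow_const s).const_mul _
    simp_rw [h1]
    rw [lintegral_const_mul _ (hlm.const_mul _), lintegral_const_mul _ hlm]
  rw [hfin]
  have h2 : ∫⁻ x, layerInt s (HLMax n h x / 2) ≤ ENNReal.ofReal (5 ^ n) * ((ENNReal.ofReal (s - 1))⁻¹ * ∫⁻ x, h x ^ s) := by
    calc ∫⁻ x, layerInt s (HLMax n h x / 2) = ∫⁻ x, 1 * layerInt s (HLMax n h x / 2) := by simp
      _ = ∫⁻ t in Ioi (0:ℝ), ENNReal.ofReal (t ^ (s - 1)) * ∫⁻ x, {x | ENNReal.ofReal t < HLMax n h x / 2}.indicator (fun _ => 1) x :=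
          ton _ (fun _ => 1) s hN measurable_const
      _ = ∫⁻ t in Ioi (0:ℝ), ENNReal.ofReal (t ^ (s - 1)) * volume {x | ENNReal.ofReal t < HLMax n h x / 2} := by
          congr 1; ext t
          congr 1
          exact lintegral_indicator_one (measurableSet_lt measurable_const hN)
      _ ≤ ∫⁻ t in Ioi (0:ℝ), ENNReal.ofReal (5 ^ n) * (ENNReal.ofReal (t ^ (s - 1 - 1)) * ∫⁻ x, {y | ENNReal.ofReal t < h y}.indicator h x) :=
          setLIntegral_mono' measurableSet_Ioi key
      _ = ENNReal.ofReal (5 ^ n) * ∫⁻ t in Ioi (0:ℝ), (ENNReal.ofReal (t ^ (s - 1 - 1)) * ∫⁻ x, {y | ENNReal.ofReal t < h y}.indicator h x) := by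
          rw [lintegral_const_mul' _ _ (by simp)]
      _ = ENNReal.ofReal (5 ^ n) * ∫⁻ x, h x * layerInt (s - 1) (h x) := by
          rw [ton h h (s - 1) hm hm]
      _ = _ := by
          congr 1
          rw [← lintegral_const_mul' _ _ (by simp [hs])]
          congr 1; ext x
          have : h x ^ s = h x * h x ^ (s - 1) := by
            conv_rhs => rw [← ENNReal.rpow_one (h x), ← ENNReal.rpow_mul, one_mul]
            rw [← ENNReal.rpow_add_of_nonneg _ _ zero_le_one hs1.le]; congr 1; ring
          rw [this, ← layerInt_eq hs1 (h x), mul_left_comm (h x), ← mul_assoc (ENNReal.ofReal (s-1))⁻¹,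
            ENNReal.inv_mul_cancel (by simp [hs]) (by simp), one_mul]
  calc _ ≤ 2 ^ s * (ENNReal.ofReal s * (ENNReal.ofReal (5 ^ n) * ((ENNReal.ofReal (s - 1))⁻¹ * ∫⁻ x, h x ^ s))) := by gcongr
    _ = _ := by ring

lemma HLMax_quasi {n : ℕ} (hn : 1 ≤ n) {q p : ℝ} (hq : 0 < q) (hqp : q < p) :
    ∃ C : ℝ≥0∞, C ≠ ⊤ ∧ ∀ h : EuclideanSpace ℝ (Fin n) → ℝ≥0∞, Measurable h →
      (∫⁻ x, ((HLMax n (fun y => h y ^ q) x) ^ (1 / q)) ^ p) ^ (1 / p) ≤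
        C * (∫⁻ x, h x ^ p) ^ (1 / p) := by
  have hp : 0 < p := hq.trans hqp
  obtain ⟨C, hC, H⟩ := HLMax_strong hn (s := p / q) ((one_lt_div hq).2 hqp)
  refine ⟨C ^ (1 / p), ENNReal.rpow_ne_top_of_nonneg (by positivity) hC, fun h hm => ?_⟩
  have := H (fun y => h y ^ q) (hm.pow_const q)
  simp only [← ENNReal.rpow_mul] at this ⊢
  rw [mul_div_cancel₀ _ hq.ne'] at this
  rw [one_div_mul_eq_div]
  calc _ ≤ (C * ∫⁻ x, h x ^ p) ^ (1 / p) := by gcongr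
    _ = _ := ENNReal.mul_rpow_of_nonneg _ _ (by positivity)

lemma good_point {n : ℕ} {q : ℝ} (hq : 0 < q) {g : EuclideanSpace ℝ (Fin n) → ℝ}
    (hg : Measurable g) {E : Set (EuclideanSpace ℝ (Fin n))} (hE : volume E = 0)
    {x c : EuclideanSpace ℝ (Fin n)} {r s A L : ℝ} (hr : 0 < r) (hs : 0 < s) (hA : 0 < A) (hL : 0 < L)
    (hint : ∫⁻ y in ball x r, ENNReal.ofReal (g y) ^ q ≤ volume (ball x r) * ENNReal.ofReal A ^ q)
    (hsub : ball c s ⊆ ball x r) (hlt : r ^ n < s ^ n * L ^ q) :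
    ∃ y ∈ ball c s, y ∉ E ∧ g y ≤ L * A := by
  by_contra! hcon
  set V := volume (ball (0 : EuclideanSpace ℝ (Fin n)) 1) with hV
  have hV0 : V ≠ 0 := (measure_ball_pos _ _ one_pos).ne'
  have hVt : V ≠ ⊤ := measure_ball_lt_top.ne
  have hLA : 0 < L * A := mul_pos hL hA
  have h1 : volume (ball c s) ≤ volume ({y | ENNReal.ofReal (L * A) ^ q ≤ ENNReal.ofReal (g y) ^ q} ∩ ball x r) := by
    have : ball c s ⊆ E ∪ ({y | ENNReal.ofReal (L * A) ^ q ≤ ENNReal.ofReal (g y) ^ q} ∩ ball x r) := by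
      intro y hy
      by_cases hyE : y ∈ E
      · exact Or.inl hyE
      · refine Or.inr ⟨?_, hsub hy⟩
        rw [mem_ofPred_eq]
        gcongr
        exact (hcon y hy hyE).le
    calc _ ≤ _ := measure_mono this
      _ ≤ _ := measure_union_le _ _
      _ = _ := by rw [hE, zero_add]
  have h2 := mul_meas_ge_le_lintegral₀ (μ := volume.restrict (ball x r))
    (f := fun y => ENNReal.ofReal (g y) ^ q) (by fun_prop) (ENNReal.ofReal (L * A) ^ q)
  rw [Measure.restrict_apply' measurableSet_ball] at h2
  have h3 : ENNReal.ofReal (L * A) ^ q * volume (ball c s) ≤ volume (ball x r) * ENNReal.ofReal A ^ q :=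
    (mul_le_mul_right h1 _).trans (h2.trans hint)
  rw [volume_ball_scale _ hr, volume_ball_scale _ hs, ENNReal.ofReal_rpow_of_pos hA,
    ENNReal.ofReal_rpow_of_pos hLA, Real.mul_rpow hL.le hA.le] at h3
  have h4 : ENNReal.ofReal (s ^ n * L ^ q * A ^ q) * V ≤ ENNReal.ofReal (r ^ n * A ^ q) * V := by
    have e1 : ENNReal.ofReal (s ^ n * L ^ q * A ^ q) = ENNReal.ofReal (L ^ q * A ^ q) * ENNReal.ofReal (s ^ n) := by
      rw [← ENNReal.ofReal_mul (by positivity)]; congr 1; ring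
    have e2 : ENNReal.ofReal (r ^ n * A ^ q) = ENNReal.ofReal (r ^ n) * ENNReal.ofReal (A ^ q) :=
      ENNReal.ofReal_mul (by positivity)
    rw [e1, e2]
    calc _ = _ := by rw [mul_assoc]
      _ ≤ _ := h3
      _ = _ := by ring
  have h5 := (ENNReal.mul_le_mul_iff_left hV0 hVt).1 h4
  rw [ENNReal.ofReal_le_ofReal_iff (by positivity)] at h5
  have hAq : 0 < A ^ q := by positivity
  nlinarith

set_option maxHeartbeats 1000000 in
lemma hajlasz_poincare {n : ℕ} (hn : 1 ≤ n) {q : ℝ} (hq : (n : ℝ) / (n + 1) ≤ q) (hq1 : q < 1) :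
    ∃ D : ℝ, 0 < D ∧ ∀ (f g : EuclideanSpace ℝ (Fin n) → ℝ) (E : Set (EuclideanSpace ℝ (Fin n)))
      (x : EuclideanSpace ℝ (Fin n)) (r A : ℝ), Measurable g → (∀ y, 0 ≤ g y) → volume E = 0 →
      (∀ x ∉ E, ∀ y ∉ E, ‖x - y‖ ≤ 1 → |f x - f y| ≤ ‖x - y‖ * (g x + g y)) →
      0 < r → r ≤ 1 → 0 < A →
      ∫⁻ y in ball x r, ENNReal.ofReal (g y) ^ q ≤ volume (ball x r) * ENNReal.ofReal A ^ q →
      ∃ a : ℝ, ∀ y ∈ ball x r, y ∉ E → |f y - a| ≤ D * r * (A + A ^ (1 - q) * (g y) ^ q) := by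
  have hn0 : (0:ℝ) < n := by exact_mod_cast hn
  have hq0 : 0 < q := lt_of_lt_of_le (by positivity) hq
  have hqn : (n:ℝ) * (1 - q) ≤ q := by
    rw [div_le_iff₀ (by positivity)] at hq; linarith
  have h1q : 0 < 1 - q := by linarith
  set K : ℝ := max ((3:ℝ) ^ (1 / (1 - q))) ((5:ℝ) ^ ((n:ℝ) / q)) with hK
  have hK1 : 1 ≤ K := le_trans (Real.one_le_rpow (by norm_num) (by positivity)) (le_max_right _ _)
  have hK0 : 0 < K := by linarith
  have hK3 : 3 ≤ K ^ (1 - q) := by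
    calc (3:ℝ) = ((3:ℝ) ^ (1 / (1 - q))) ^ (1 - q) := by
          rw [← Real.rpow_mul (by norm_num), one_div_mul_cancel h1q.ne', Real.rpow_one]
      _ ≤ _ := by gcongr; exact le_max_left _ _
  have hK5 : (5:ℝ) ^ n ≤ K ^ q := by
    calc (5:ℝ) ^ n = ((5:ℝ) ^ ((n:ℝ) / q)) ^ q := by
          rw [← Real.rpow_mul (by norm_num), div_mul_cancel₀ _ hq0.ne', Real.rpow_natCast]
      _ ≤ _ := by gcongr; exact le_max_right _ _
  have h2q : 0 < (2:ℝ) ^ q - 1 := by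
    have := Real.one_lt_rpow (x := 2) (by norm_num) hq0; linarith
  set D0 : ℝ := max (4 * K) (9 * K ^ q / ((2:ℝ) ^ q - 1)) with hD0
  have hD0a : 4 * K ≤ D0 := le_max_left _ _
  have hD0b : 9 * K ^ q ≤ D0 * ((2:ℝ) ^ q - 1) := by
    rw [← div_le_iff₀ h2q]; exact le_max_right _ _
  have hD0p : 0 < D0 := by linarith
  refine ⟨2 * D0, by positivity, ?_⟩
  intro f g E x r A hg hg0 hE hf hr hr1 hA hint
  -- base point
  obtain ⟨z0, hz0b, hz0E, hz0g⟩ := good_point hq0 hg hE (c := x) hr (s := r / 4) (L := K)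
    (by positivity) hA hK0 hint (ball_subset_ball (by linarith)) (by
      rw [div_pow]
      have : (4:ℝ) ^ n < 5 ^ n := by gcongr <;> first | omega | norm_num
      rw [div_mul_eq_mul_div, lt_div_iff₀ (by positivity)]
      have : (4:ℝ) ^ n < K ^ q := this.trans_le hK5
      gcongr)
  have hP : ∀ k : ℕ, ∀ y ∈ ball x r, y ∉ E → g y ≤ 2 ^ k * K * A →
      |f y - f z0| ≤ D0 * r * A * ((2:ℝ) ^ k) ^ q := by
    intro k
    induction k with
    | zero =>
      intro y hy hyE hyg
      simp only [pow_zero, one_mul, Real.one_rpow, mul_one] at hyg ⊢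
      have hyx : ‖y - x‖ < r := by rwa [mem_ball_iff_norm] at hy
      obtain ⟨y1, hy1b, hy1E, hy1g⟩ := good_point hq0 hg hE (c := x + (1/2 : ℝ) • (y - x)) hr (s := r / 4) (L := K)
        (by positivity) hA hK0 hint (by
          intro z hz
          rw [mem_ball_iff_norm] at hz ⊢
          have : z - x = (z - (x + (1/2 : ℝ) • (y - x))) + (1/2 : ℝ) • (y - x) := by abel
          rw [this]
          refine (norm_add_le _ _).trans_lt ?_
          rw [norm_smul]; norm_num; linarith) (by
        rw [div_pow]
        have : (4:ℝ) ^ n < 5 ^ n := by gcongr <;> first | omega | norm_num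
        rw [div_mul_eq_mul_div, lt_div_iff₀ (by positivity)]
        have : (4:ℝ) ^ n < K ^ q := this.trans_le hK5
        gcongr)
      rw [mem_ball_iff_norm] at hy1b hz0b
      have d1 : ‖y - y1‖ ≤ r := by
        have : y - y1 = (1/2 : ℝ) • (y - x) - (y1 - (x + (1/2 : ℝ) • (y - x))) := by
          have : y - x = (1/2 : ℝ) • (y - x) + (1/2 : ℝ) • (y - x) := by
            rw [← add_smul]; norm_num
          calc y - y1 = (y - x) + x - y1 := by abel
            _ = ((1/2 : ℝ) • (y - x) + (1/2 : ℝ) • (y - x)) + x - y1 := by rw [← this]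
            _ = _ := by abel
        rw [this]
        refine (norm_sub_le _ _).trans ?_
        rw [norm_smul]; norm_num; linarith
      have d2 : ‖y1 - z0‖ ≤ r := by
        have : y1 - z0 = (y1 - (x + (1/2 : ℝ) • (y - x))) + (1/2 : ℝ) • (y - x) - (z0 - x) := by abel
        rw [this]
        refine (norm_sub_le _ _).trans ?_
        have := norm_add_le (y1 - (x + (1/2 : ℝ) • (y - x))) ((1/2 : ℝ) • (y - x))
        rw [norm_smul] at this; norm_num at this ⊢; linarith
      have e1 := hf y hyE y1 hy1E (d1.trans hr1)
      have e2 := hf y1 hy1E z0 hz0E (d2.trans hr1)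
      have e1' : |f y - f y1| ≤ r * (2 * (K * A)) := e1.trans (by
        apply mul_le_mul d1 (by linarith) _ hr.le
        have := hg0 y; have := hg0 y1; linarith)
      have e2' : |f y1 - f z0| ≤ r * (2 * (K * A)) := e2.trans (by
        apply mul_le_mul d2 (by linarith) _ hr.le
        have := hg0 y1; have := hg0 z0; linarith)
      have := abs_sub_le (f y) (f y1) (f z0)
      have hrA : 0 < r * A := by positivity
      nlinarith
    | succ k ih =>
      intro y hy hyE hyg
      set L : ℝ := 2 ^ k * K with hLdef
      have hL1 : 1 ≤ L := one_le_mul_of_one_le_of_one_le (one_le_pow₀ (by norm_num)) hK1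
      have hL0 : 0 < L := by linarith
      have hLK : K ≤ L := le_mul_of_one_le_left hK0.le (one_le_pow₀ (by norm_num))
      have hL3 : 3 ≤ L ^ (1 - q) := hK3.trans (by gcongr)
      have hLp : 0 < L ^ (1 - q) := by positivity
      set ρ : ℝ := 3 * r / L ^ (1 - q) with hρ
      have hρ0 : 0 < ρ := by positivity
      have hρr : ρ ≤ r := by rw [hρ, div_le_iff₀ hLp]; nlinarith
      have hyx : ‖y - x‖ < r := by rwa [mem_ball_iff_norm] at hy
      set c := y + (ρ / (2 * r)) • (x - y) with hc
      have hcy : ‖y - c‖ ≤ ρ / 2 := by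
        have : y - c = -((ρ / (2 * r)) • (x - y)) := by rw [hc]; abel
        rw [this, norm_neg, norm_smul, Real.norm_of_nonneg (by positivity), norm_sub_rev x y]
        calc ρ / (2 * r) * ‖y - x‖ ≤ ρ / (2 * r) * r := by gcongr
          _ = ρ / 2 := by field_simp
      obtain ⟨y', hy'b, hy'E, hy'g⟩ := good_point hq0 hg hE (c := c) hr (s := ρ / 2) (L := L)
        (by positivity) hA hL0 hint (by
          intro z hz
          rw [mem_ball_iff_norm] at hz ⊢
          have : z - x = (z - c) + (1 - ρ / (2 * r)) • (y - x) := by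
            rw [hc, sub_smul, one_smul, smul_sub, smul_sub]; abel
          rw [this]
          refine (norm_add_le _ _).trans_lt ?_
          have h01 : 0 ≤ 1 - ρ / (2 * r) := by
            rw [sub_nonneg, div_le_one (by positivity)]; linarith
          rw [norm_smul, Real.norm_of_nonneg h01]
          have : (1 - ρ / (2 * r)) * ‖y - x‖ ≤ (1 - ρ / (2 * r)) * r := by gcongr
          have e : (1 - ρ / (2 * r)) * r = r - ρ / 2 := by field_simp
          linarith) (by
          have e : (ρ / 2) ^ n * L ^ q = r ^ n * ((3/2) ^ n * (L ^ q / (L ^ (1 - q)) ^ n)) := by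
            rw [hρ]
            have : 3 * r / L ^ (1 - q) / 2 = r * (3 / 2) / L ^ (1 - q) := by ring
            rw [this, div_pow, mul_pow]; ring
          rw [e]
          have h1 : (1:ℝ) < (3/2) ^ n := one_lt_pow₀ (by norm_num) (by omega)
          have h2 : 1 ≤ L ^ q / (L ^ (1 - q)) ^ n := by
            rw [one_le_div (by positivity), ← Real.rpow_natCast, ← Real.rpow_mul hL0.le]
            exact Real.rpow_le_rpow_of_exponent_le hL1 (by linarith)
          have h3 : 1 < (3/2 : ℝ) ^ n * (L ^ q / (L ^ (1 - q)) ^ n) := by nlinarith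
          have : 0 < r ^ n := by positivity
          nlinarith)
      have hy'x : y' ∈ ball x r := by
        rw [mem_ball_iff_norm] at hy'b ⊢
        have : y' - x = (y' - c) + (1 - ρ / (2 * r)) • (y - x) := by
            rw [hc, sub_smul, one_smul, smul_sub, smul_sub]; abel
        rw [this]
        refine (norm_add_le _ _).trans_lt ?_
        have h01 : 0 ≤ 1 - ρ / (2 * r) := by
          rw [sub_nonneg, div_le_one (by positivity)]; linarith
        rw [norm_smul, Real.norm_of_nonneg h01]
        have : (1 - ρ / (2 * r)) * ‖y - x‖ ≤ (1 - ρ / (2 * r)) * r := by gcongr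
        have e : (1 - ρ / (2 * r)) * r = r - ρ / 2 := by field_simp
        linarith
      have hi := ih y' hy'x hy'E hy'g
      rw [mem_ball_iff_norm] at hy'b
      have d1 : ‖y - y'‖ ≤ ρ := by
        have : y - y' = (y - c) - (y' - c) := by abel
        rw [this]
        refine (norm_sub_le _ _).trans ?_
        linarith
      have e1 := hf y hyE y' hy'E (d1.trans (hρr.trans hr1))
      have e1' : |f y - f y'| ≤ ρ * (3 * L * A) := e1.trans (by
        have hyg' : g y ≤ 2 * (L * A) := by rw [pow_succ] at hyg; rw [hLdef]; linarith
        apply mul_le_mul d1 (by linarith) _ hρ0.le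
        have := hg0 y; have := hg0 y'; linarith)
      have e2 : ρ * (3 * L * A) = 9 * r * A * L ^ q := by
        have : L = L ^ q * L ^ (1 - q) := by
          rw [← Real.rpow_add hL0]; simp
        rw [hρ, div_mul_eq_mul_div, div_eq_iff hLp.ne']
        calc 3 * r * (3 * L * A) = 9 * r * A * L := by ring
          _ = 9 * r * A * (L ^ q * L ^ (1 - q)) := by rw [← this]
          _ = _ := by ring
      have e3 : L ^ q = ((2:ℝ) ^ k) ^ q * K ^ q := Real.mul_rpow (by positivity) hK0.le
      have e4 : ((2:ℝ) ^ (k + 1)) ^ q = ((2:ℝ) ^ k) ^ q * 2 ^ q := by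
        rw [pow_succ, Real.mul_rpow (by positivity) (by norm_num)]
      have := abs_sub_le (f y) (f y') (f z0)
      rw [e4]
      have hpos : 0 < r * A * ((2:ℝ) ^ k) ^ q := by positivity
      rw [e2, e3] at e1'
      have h9 := mul_le_mul_of_nonneg_left hD0b hpos.le
      linarith
  refine ⟨f z0, fun y hy hyE => ?_⟩
  have hgy := hg0 y
  have hterm : 0 ≤ A ^ (1 - q) * g y ^ q := by positivity
  by_cases hyK : g y ≤ K * A
  · have := hP 0 y hy hyE (by simpa using hyK)
    simp only [pow_zero, Real.one_rpow, mul_one] at this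
    have h1 : 0 < D0 * r := by positivity
    nlinarith
  · have hKA : 0 < K * A := by positivity
    obtain ⟨k, hk1, hk2⟩ := exists_nat_pow_near (x := g y / (K * A)) (y := (2:ℝ))
      ((one_le_div hKA).2 (not_le.1 hyK).le) (by norm_num)
    have := hP (k + 1) y hy hyE (by
      rw [mul_assoc]; exact ((div_lt_iff₀ hKA).1 hk2).le)
    have e4 : ((2:ℝ) ^ (k + 1)) ^ q = ((2:ℝ) ^ k) ^ q * 2 ^ q := by
      rw [pow_succ, Real.mul_rpow (by positivity) (by norm_num)]
    have h2 : (2:ℝ) ^ q ≤ 2 := by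
      calc (2:ℝ) ^ q ≤ 2 ^ (1:ℝ) := Real.rpow_le_rpow_of_exponent_le (by norm_num) hq1.le
        _ = 2 := Real.rpow_one _
    have h3 : ((2:ℝ) ^ k) ^ q ≤ (g y / A) ^ q := by
      gcongr
      refine hk1.trans ?_
      gcongr
      exact le_mul_of_one_le_left hA.le hK1
    have h4 : A * (g y / A) ^ q = A ^ (1 - q) * g y ^ q := by
      rw [Real.div_rpow hgy hA.le, Real.rpow_sub hA, Real.rpow_one]; ring
    have h5 : ((2:ℝ) ^ k) ^ q * 2 ^ q ≤ (g y / A) ^ q * 2 := by gcongr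
    calc |f y - f z0| ≤ D0 * r * A * ((2:ℝ) ^ (k + 1)) ^ q := this
      _ ≤ D0 * r * A * ((g y / A) ^ q * 2) := by rw [e4]; gcongr
      _ = 2 * D0 * r * (A * (g y / A) ^ q) := by ring
      _ ≤ _ := by rw [h4]; gcongr; linarith

lemma hcs_of_supp {n : ℕ} {ψ : EuclideanSpace ℝ (Fin n) → ℝ} (hψsupp : tsupport ψ ⊆ ball 0 1) :
    HasCompactSupport ψ :=
  HasCompactSupport.of_support_subset_isCompact (isCompact_closedBall (0 : EuclideanSpace ℝ (Fin n)) 1)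
    ((subset_tsupport ψ).trans (hψsupp.trans ball_subset_closedBall))

lemma fderiv_eq_zero_of_supp {n : ℕ} {ψ : EuclideanSpace ℝ (Fin n) → ℝ}
    (hψsupp : tsupport ψ ⊆ ball 0 1) {z : EuclideanSpace ℝ (Fin n)} (hz : 1 ≤ ‖z‖) :
    fderiv ℝ ψ z = 0 := by
  have : z ∉ tsupport (fderiv ℝ ψ) := fun h => by
    have h1 := hψsupp (tsupport_fderiv_subset ℝ h)
    rw [mem_ball_zero_iff] at h1; linarith
  exact image_eq_zero_of_notMem_tsupport this

lemma psi_eq_zero_of_supp {n : ℕ} {ψ : EuclideanSpace ℝ (Fin n) → ℝ}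
    (hψsupp : tsupport ψ ⊆ ball 0 1) {z : EuclideanSpace ℝ (Fin n)} (hz : 1 ≤ ‖z‖) :
    ψ z = 0 := by
  have : z ∉ tsupport ψ := fun h => by
    have h1 := hψsupp h
    rw [mem_ball_zero_iff] at h1; linarith
  exact image_eq_zero_of_notMem_tsupport this

lemma exists_fderiv_bound {n : ℕ} {ψ : EuclideanSpace ℝ (Fin n) → ℝ} (hψ : ContDiff ℝ (⊤ : ℕ∞) ψ)
    (hψsupp : tsupport ψ ⊆ ball 0 1) : ∃ M : ℝ, 0 < M ∧ (∀ z, ‖fderiv ℝ ψ z‖ ≤ M) ∧ ∀ z, |ψ z| ≤ M := by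
  have hc := hcs_of_supp hψsupp
  obtain ⟨M1, h1⟩ := (hc.fderiv ℝ).exists_bound_of_continuous (hψ.continuous_fderiv (by simp))
  obtain ⟨M2, h2⟩ := hc.exists_bound_of_continuous hψ.continuous
  exact ⟨max 1 (max M1 M2), by positivity, fun z => (h1 z).trans (by simp), fun z => (h2 z).trans (by simp)⟩

lemma norm_single_one {n : ℕ} (j : Fin n) : ‖(EuclideanSpace.single j 1 : EuclideanSpace ℝ (Fin n))‖ = 1 := by
  simp

lemma integral_fderiv_eq_zero' {n : ℕ} {ψ : EuclideanSpace ℝ (Fin n) → ℝ} (hψ : ContDiff ℝ (⊤ : ℕ∞) ψ)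
    (hψsupp : tsupport ψ ⊆ ball 0 1) (e : EuclideanSpace ℝ (Fin n)) :
    ∫ z, fderiv ℝ ψ z e = 0 := by
  have hc := hcs_of_supp hψsupp
  have hcont : Continuous fun z => fderiv ℝ ψ z e :=
    (hψ.continuous_fderiv (by simp)).clm_apply continuous_const
  have hcs : HasCompactSupport fun z => fderiv ℝ ψ z e := hc.fderiv_apply ℝ e
  have := integral_mul_fderiv_eq_neg_fderiv_mul_of_integrable (μ := (volume : Measure (EuclideanSpace ℝ (Fin n))))
    (f := fun _ => (1:ℝ)) (g := ψ) (v := e) (by simp)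
    (by simpa using hcont.integrable_of_hasCompactSupport hcs)
    (by simpa using hψ.continuous.integrable_of_hasCompactSupport hc)
    (fun x _ => by fun_prop) (fun x _ => (hψ.differentiable (by simp)) x)
  simpa using this

lemma dir1_pointwise {n : ℕ} (hn : 1 ≤ n) {q : ℝ} (hq : (n : ℝ) / (n + 1) ≤ q) (hq1 : q < 1)
    {ψ : EuclideanSpace ℝ (Fin n) → ℝ} (hψ : ContDiff ℝ (⊤ : ℕ∞) ψ)
    (hψsupp : tsupport ψ ⊆ ball 0 1) :
    ∃ C : ℝ≥0∞, C ≠ 0 ∧ C ≠ ⊤ ∧ ∀ f g : EuclideanSpace ℝ (Fin n) → ℝ, LocallyIntegrable f →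
      IsLocalHajlaszGradient n f g → ∀ j x, truncSmoothMax n ψ f j x ≤
        C * (HLMax n (fun y => ENNReal.ofReal (g y) ^ q) x) ^ (1 / q) := by
  have hn0 : (0:ℝ) < n := by exact_mod_cast hn
  have hq0 : 0 < q := lt_of_lt_of_le (by positivity) hq
  obtain ⟨D, hD, H⟩ := hajlasz_poincare hn hq hq1
  obtain ⟨M, hM, hMb, -⟩ := exists_fderiv_bound hψ hψsupp
  set V := volume (ball (0 : EuclideanSpace ℝ (Fin n)) 1) with hV
  have hV0 : V ≠ 0 := (measure_ball_pos _ _ one_pos).ne'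
  have hVt : V ≠ ⊤ := measure_ball_lt_top.ne
  have hC0 : ENNReal.ofReal (2 * M * D) * V ≠ 0 := mul_ne_zero (by simp; positivity) hV0
  have hCt : ENNReal.ofReal (2 * M * D) * V ≠ ⊤ := ENNReal.mul_ne_top (by simp) hVt
  refine ⟨ENNReal.ofReal (2 * M * D) * V, hC0, hCt, ?_⟩
  intro f g hf ⟨hg, hg0, E, hE, hfg⟩ j x
  set Hx := HLMax n (fun y => ENNReal.ofReal (g y) ^ q) x with hHx
  by_cases hHt : Hx = ⊤
  · rw [hHt, ENNReal.top_rpow_of_pos (by positivity), ENNReal.mul_top hC0]; exact le_top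
  have hHt' : Hx ^ (1 / q) ≠ ⊤ := ENNReal.rpow_ne_top_of_nonneg (by positivity) hHt
  refine iSup_le fun ⟨t, ht0, ht1⟩ => ?_
  simp only
  rw [mul_comm (ENNReal.ofReal (2 * M * D) * V), ← ENNReal.div_le_iff hC0 hCt]
  refine ENNReal.le_of_forall_pos_le_add fun ε hε _ => ?_
  set A : ℝ := (Hx ^ (1 / q)).toReal + ε with hAdef
  have hA : 0 < A := add_pos_of_nonneg_of_pos ENNReal.toReal_nonneg hε
  have hAe : ENNReal.ofReal A = Hx ^ (1 / q) + ε := by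
    rw [hAdef, ENNReal.ofReal_add ENNReal.toReal_nonneg ε.coe_nonneg, ENNReal.ofReal_toReal hHt',
      ENNReal.ofReal_coe_nnreal]
  have hHA : Hx ≤ ENNReal.ofReal A ^ q := by
    calc Hx = (Hx ^ (1 / q)) ^ q := by
          rw [← ENNReal.rpow_mul, one_div_mul_cancel hq0.ne', ENNReal.rpow_one]
      _ ≤ _ := by rw [hAe]; gcongr; exact le_self_add
  have hint : ∫⁻ y in ball x t, ENNReal.ofReal (g y) ^ q ≤ volume (ball x t) * ENNReal.ofReal A ^ q :=
    (setLIntegral_ball_le_HLMax (fun y => ENNReal.ofReal (g y) ^ q) (mem_ball_self ht0)).trans (by gcongr)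
  obtain ⟨a, ha⟩ := H f g E x t A hg hg0 hE hfg ht0 ht1 hA hint
  rw [← hAe, ENNReal.div_le_iff hC0 hCt]
  set η : EuclideanSpace ℝ (Fin n) → ℝ :=
    fun y => fderiv ℝ ψ (t⁻¹ • (x - y)) (EuclideanSpace.single j 1) with hη
  have hηc : Continuous η := by
    have := hψ.continuous_fderiv (by simp)
    exact (this.comp (by fun_prop)).clm_apply continuous_const
  have hηM : ∀ y, |η y| ≤ M := fun y => by
    have h1 := (fderiv ℝ ψ (t⁻¹ • (x - y))).le_opNorm (EuclideanSpace.single j 1)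
    rw [norm_single_one, mul_one] at h1
    exact h1.trans (hMb _)
  have hη0 : ∀ y, y ∉ ball x t → η y = 0 := by
    intro y hy
    have h1 : 1 ≤ ‖t⁻¹ • (x - y)‖ := by
      rw [norm_smul, Real.norm_of_nonneg (by positivity), inv_mul_eq_div, one_le_div ht0]
      rw [mem_ball_iff_norm, not_lt, norm_sub_rev] at hy
      exact hy
    simp only [hη, fderiv_eq_zero_of_supp hψsupp h1]; simp
  have hηcs : HasCompactSupport η :=
    HasCompactSupport.intro (isCompact_closedBall x t) fun y hy =>
      hη0 y fun h => hy (ball_subset_closedBall h)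
  have hηint : ∫ y, η y = 0 := by
    have h1 := integral_sub_left_eq_self (fun z => fderiv ℝ ψ (t⁻¹ • z) (EuclideanSpace.single j 1))
      (volume : Measure (EuclideanSpace ℝ (Fin n))) x
    have h2 := Measure.integral_comp_smul (volume : Measure (EuclideanSpace ℝ (Fin n)))
      (fun z => fderiv ℝ ψ z (EuclideanSpace.single j 1)) t⁻¹
    rw [integral_fderiv_eq_zero' hψ hψsupp, smul_zero] at h2
    rw [← h2]; exact h1
  have hηi : Integrable η := hηc.integrable_of_hasCompactSupport hηcs
  have hfη : Integrable fun y => f y * η y := by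
    have := hf.integrable_smul_right_of_hasCompactSupport hηc hηcs
    simpa using this
  have e1 : ∫ y, f y * η y = ∫ y, (f y - a) * η y := by
    simp_rw [sub_mul]
    rw [integral_sub hfη (hηi.const_mul a), integral_const_mul, hηint, mul_zero, sub_zero]
  have e2 : ENNReal.ofReal |∫ y, f y * η y| ≤
      ENNReal.ofReal (2 * M * D * t * A) * volume (ball x t) := by
    rw [e1, ← Real.enorm_eq_ofReal_abs]
    calc ‖∫ y, (f y - a) * η y‖ₑ ≤ ∫⁻ y, ‖(f y - a) * η y‖ₑ := enorm_integral_le_lintegral_enorm _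
      _ = ∫⁻ y in ball x t, ‖(f y - a) * η y‖ₑ := by
          rw [setLIntegral_eq_of_support_subset]
          intro y hy
          by_contra hy'
          exact hy (by simp [hη0 y hy'])
      _ ≤ ∫⁻ y in ball x t, ENNReal.ofReal (M * D * t) * (ENNReal.ofReal A +
            ENNReal.ofReal (A ^ (1 - q)) * ENNReal.ofReal (g y) ^ q) := by
          refine lintegral_mono_ae ?_
          have hE' : ∀ᵐ y ∂(volume.restrict (ball x t)), y ∉ E :=
            ae_restrict_of_ae (measure_eq_zero_iff_ae_notMem.1 hE)
          filter_upwards [hE', ae_restrict_mem measurableSet_ball] with y hyE hy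
          have hgy := hg0 y
          rw [ENNReal.ofReal_rpow_of_nonneg hgy hq0.le, ← ENNReal.ofReal_mul (by positivity),
            ← ENNReal.ofReal_add hA.le (by positivity), ← ENNReal.ofReal_mul (by positivity),
            Real.enorm_eq_ofReal_abs]
          apply ENNReal.ofReal_le_ofReal
          rw [abs_mul]
          calc |f y - a| * |η y| ≤ (D * t * (A + A ^ (1 - q) * (g y) ^ q)) * M :=
                mul_le_mul (ha y hy hyE) (hηM y) (abs_nonneg _) (by positivity)
            _ = _ := by ring
      _ = ENNReal.ofReal (M * D * t) * (ENNReal.ofReal A * volume (ball x t) +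
            ENNReal.ofReal (A ^ (1 - q)) * ∫⁻ y in ball x t, ENNReal.ofReal (g y) ^ q) := by
          rw [lintegral_const_mul' _ _ (by simp), lintegral_add_left measurable_const,
            lintegral_const_mul' _ _ (by simp), lintegral_const]
          simp
      _ ≤ ENNReal.ofReal (M * D * t) * (ENNReal.ofReal A * volume (ball x t) +
            ENNReal.ofReal (A ^ (1 - q)) * (volume (ball x t) * ENNReal.ofReal A ^ q)) := by gcongr
      _ = _ := by
          have : ENNReal.ofReal (A ^ (1 - q)) * ENNReal.ofReal A ^ q = ENNReal.ofReal A := by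
            rw [ENNReal.ofReal_rpow_of_pos hA, ← ENNReal.ofReal_mul (by positivity), ← Real.rpow_add hA]
            simp
          have e3 : ENNReal.ofReal (2 * M * D * t * A) = 2 * (ENNReal.ofReal (M * D * t) * ENNReal.ofReal A) := by
            rw [← ENNReal.ofReal_mul (by positivity)]
            rw [show 2 * M * D * t * A = 2 * (M * D * t * A) by ring, ENNReal.ofReal_mul (by norm_num)]
            simp
          rw [mul_left_comm (ENNReal.ofReal (A ^ (1 - q))), this, e3]
          ring
  calc ENNReal.ofReal (t⁻¹ ^ (n + 1) * |∫ y, f y * η y|)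
      = ENNReal.ofReal (t⁻¹ ^ (n + 1)) * ENNReal.ofReal |∫ y, f y * η y| := ENNReal.ofReal_mul (by positivity)
    _ ≤ ENNReal.ofReal (t⁻¹ ^ (n + 1)) * (ENNReal.ofReal (2 * M * D * t * A) * volume (ball x t)) := by gcongr
    _ = ENNReal.ofReal A * (ENNReal.ofReal (2 * M * D) * V) := by
        rw [volume_ball_scale x ht0, ← mul_assoc, ← mul_assoc, ← mul_assoc, ← ENNReal.ofReal_mul (by positivity),
          ← ENNReal.ofReal_mul (by positivity), ← ENNReal.ofReal_mul (by positivity)]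
        congr 2
        rw [pow_succ, inv_pow]; field_simp

/-- Convolution of a kernel `a` with `w`. -/
def cv {n : ℕ} (a w : EuclideanSpace ℝ (Fin n) → ℝ) (x : EuclideanSpace ℝ (Fin n)) : ℝ :=
  ∫ y, w y * a (x - y)

lemma cv_eq_conv {n : ℕ} (a w : EuclideanSpace ℝ (Fin n) → ℝ) :
    cv a w = convolution w a (ContinuousLinearMap.mul ℝ ℝ) volume := rfl

lemma cv_continuous {n : ℕ} {a w : EuclideanSpace ℝ (Fin n) → ℝ} (ha : Continuous a)
    (hca : HasCompactSupport a) (hw : LocallyIntegrable w) : Continuous (cv a w) := by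
  rw [cv_eq_conv]
  exact hca.continuous_convolution_right _ hw ha

lemma cv_comm {n : ℕ} {a b w : EuclideanSpace ℝ (Fin n) → ℝ} (ha : Continuous a)
    (hca : HasCompactSupport a) (hb : Continuous b)
    (hcb : HasCompactSupport b) (hw : LocallyIntegrable w) : cv a (cv b w) = cv b (cv a w) := by
  have key : ∀ {a b : EuclideanSpace ℝ (Fin n) → ℝ}, Continuous a → HasCompactSupport a →
      Continuous b → HasCompactSupport b → cv a (cv b w) = cv (cv a b) w := by
    intro a b ha hca hb hcb
    funext x
    simp only [cv_eq_conv]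
    have hwn : LocallyIntegrable (fun x => ‖w x‖) := fun x => (hw x).norm
    have hcv : Continuous (convolution (fun x => ‖b x‖) (fun x => ‖a x‖) (ContinuousLinearMap.mul ℝ ℝ) volume) :=
      hca.norm.continuous_convolution_right _ hb.norm.locallyIntegrable ha.norm
    refine convolution_assoc (ContinuousLinearMap.mul ℝ ℝ) (ContinuousLinearMap.mul ℝ ℝ)
      (ContinuousLinearMap.mul ℝ ℝ) (ContinuousLinearMap.mul ℝ ℝ) (fun x y z => mul_assoc x y z)
      hw.aestronglyMeasurable hb.aestronglyMeasurable ha.aestronglyMeasurable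
      (Filter.Eventually.of_forall (hcb.convolutionExists_right _ hw hb))
      (Filter.Eventually.of_forall (hca.norm.convolutionExists_right _ hb.norm.locallyIntegrable ha.norm)) ?_
    exact HasCompactSupport.convolutionExists_right _ (hcb.norm.convolution _ hca.norm) hwn hcv x
  rw [key ha hca hb hcb, key hb hcb ha hca]
  congr 1
  rw [cv_eq_conv, cv_eq_conv, ← convolution_flip]
  congr 1
  ext
  simp

lemma cv_hasFDerivAt {n : ℕ} {a w : EuclideanSpace ℝ (Fin n) → ℝ} (ha : ContDiff ℝ 1 a)
    (hca : HasCompactSupport a) (hw : LocallyIntegrable w) (x : EuclideanSpace ℝ (Fin n)) :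
    DifferentiableAt ℝ (cv a w) x ∧
      ∀ e, fderiv ℝ (cv a w) x e = cv (fun z => fderiv ℝ a z e) w x := by
  have h := hca.hasFDerivAt_convolution_right (ContinuousLinearMap.mul ℝ ℝ) hw ha x
  rw [cv_eq_conv]
  refine ⟨h.differentiableAt, fun e => ?_⟩
  rw [h.fderiv, convolution_precompR_apply _ hw (hca.fderiv ℝ) (ha.continuous_fderiv one_ne_zero)]
  rfl

lemma cv_deriv_swap {n : ℕ} {a b w : EuclideanSpace ℝ (Fin n) → ℝ} (ha : ContDiff ℝ 1 a)
    (hca : HasCompactSupport a) (hb : ContDiff ℝ 1 b)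
    (hcb : HasCompactSupport b) (hw : LocallyIntegrable w) (e : EuclideanSpace ℝ (Fin n)) :
    cv a (cv (fun z => fderiv ℝ b z e) w) = cv b (cv (fun z => fderiv ℝ a z e) w) := by
  have hda : Continuous fun z => fderiv ℝ a z e :=
    (ha.continuous_fderiv one_ne_zero).clm_apply continuous_const
  have hdb : Continuous fun z => fderiv ℝ b z e :=
    (hb.continuous_fderiv one_ne_zero).clm_apply continuous_const
  have hcda : HasCompactSupport fun z => fderiv ℝ a z e := hca.fderiv_apply ℝ e
  have hcdb : HasCompactSupport fun z => fderiv ℝ b z e := hcb.fderiv_apply ℝ e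
  rw [cv_comm ha.continuous hca hdb hcdb hw, cv_comm hb.continuous hcb hda hcda hw]
  funext x
  have h1 := (cv_hasFDerivAt hb hcb (cv_continuous ha.continuous hca hw).locallyIntegrable x).2 e
  have h2 := (cv_hasFDerivAt ha hca (cv_continuous hb.continuous hcb hw).locallyIntegrable x).2 e
  rw [← h1, ← h2, cv_comm ha.continuous hca hb.continuous hcb hw]

lemma cv_mul_integrable {n : ℕ} {a w : EuclideanSpace ℝ (Fin n) → ℝ} (ha : Continuous a)
    (hca : HasCompactSupport a) (hw : LocallyIntegrable w) (x : EuclideanSpace ℝ (Fin n)) :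
    Integrable fun y => w y * a (x - y) :=
  hca.convolutionExists_right (ContinuousLinearMap.mul ℝ ℝ) hw ha x

lemma cv_near {n : ℕ} {a w : EuclideanSpace ℝ (Fin n) → ℝ} (ha : Continuous a)
    (hca : HasCompactSupport a) (hw : LocallyIntegrable w) {ρ L β c : ℝ}
    (hsupp : ∀ z, ρ ≤ ‖z‖ → a z = 0) (hint : ∫ z, a z = 1) (hL : ∫ z, |a z| ≤ L)
    (y : EuclideanSpace ℝ (Fin n)) (hβ0 : 0 ≤ β)
    (hβ : ∀ z, ‖z - y‖ < ρ → |w z - c| ≤ β) : |cv a w y - c| ≤ L * β := by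
  have hai : Integrable a := ha.integrable_of_hasCompactSupport hca
  have h1 : Integrable fun z => a (y - z) := hai.comp_sub_left y
  have h2 : ∫ z, a (y - z) = 1 := by rw [integral_sub_left_eq_self a volume y, hint]
  have h3 : ∫ z, |a (y - z)| = ∫ z, |a z| := integral_sub_left_eq_self (fun z => |a z|) volume y
  have h4 : cv a w y - c = ∫ z, (w z - c) * a (y - z) := by
    simp_rw [sub_mul]
    rw [integral_sub (cv_mul_integrable ha hca hw y) (h1.const_mul c), integral_const_mul, h2, mul_one]
    rfl
  rw [h4]
  calc |∫ z, (w z - c) * a (y - z)| ≤ ∫ z, |a (y - z)| * β := by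
        rw [← Real.norm_eq_abs]
        refine norm_integral_le_of_norm_le (h1.abs.mul_const β) (Filter.Eventually.of_forall fun z => ?_)
        rw [Real.norm_eq_abs, abs_mul]
        by_cases hz : ‖z - y‖ < ρ
        · rw [mul_comm]; exact mul_le_mul_of_nonneg_left (hβ z hz) (abs_nonneg _)
        · rw [hsupp (y - z) (by rw [norm_sub_rev]; exact not_lt.1 hz)]; simp
    _ ≤ L * β := by
        rw [integral_mul_const, h3]; exact mul_le_mul_of_nonneg_right hL hβ0

lemma cv_bound {n : ℕ} {a w : EuclideanSpace ℝ (Fin n) → ℝ} (ha : Continuous a)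
    (hca : HasCompactSupport a) {ρ L β : ℝ}
    (hsupp : ∀ z, ρ ≤ ‖z‖ → a z = 0) (hL : ∫ z, |a z| ≤ L)
    (y : EuclideanSpace ℝ (Fin n)) (hβ0 : 0 ≤ β)
    (hβ : ∀ z, ‖z - y‖ < ρ → |w z| ≤ β) : |cv a w y| ≤ L * β := by
  have hai : Integrable a := ha.integrable_of_hasCompactSupport hca
  have h1 : Integrable fun z => a (y - z) := hai.comp_sub_left y
  have h3 : ∫ z, |a (y - z)| = ∫ z, |a z| := integral_sub_left_eq_self (fun z => |a z|) volume y
  calc |∫ z, (w z) * a (y - z)| ≤ ∫ z, |a (y - z)| * β := by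
        rw [← Real.norm_eq_abs]
        refine norm_integral_le_of_norm_le (h1.abs.mul_const β) (Filter.Eventually.of_forall fun z => ?_)
        rw [Real.norm_eq_abs, abs_mul]
        by_cases hz : ‖z - y‖ < ρ
        · rw [mul_comm]; exact mul_le_mul_of_nonneg_left (hβ z hz) (abs_nonneg _)
        · rw [hsupp (y - z) (by rw [norm_sub_rev]; exact not_lt.1 hz)]; simp
    _ ≤ L * β := by
        rw [integral_mul_const, h3]; exact mul_le_mul_of_nonneg_right hL hβ0

lemma locInt_ball {n : ℕ} {v : EuclideanSpace ℝ (Fin n) → ℝ} (hv : LocallyIntegrable v)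
    (y : EuclideanSpace ℝ (Fin n)) (R : ℝ) : IntegrableOn v (ball y R) :=
  (hv.integrableOn_isCompact (isCompact_closedBall y R)).mono_set ball_subset_closedBall

lemma cv_diff {n : ℕ} {a v : EuclideanSpace ℝ (Fin n) → ℝ} (ha : Continuous a)
    (hca : HasCompactSupport a) (hv : LocallyIntegrable v) {ρ τ Λ : ℝ} (hΛ : 0 ≤ Λ)
    (hsupp : ∀ z, ρ ≤ ‖z‖ → a z = 0) (hlip : ∀ z z', |a z - a z'| ≤ Λ * ‖z - z'‖)
    {y z : EuclideanSpace ℝ (Fin n)} (hτ : ‖z - y‖ ≤ τ) :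
    |cv a v z - cv a v y| ≤ Λ * τ * ∫ s in ball y (ρ + τ), |v s| := by
  have hτ0 : 0 ≤ τ := (norm_nonneg _).trans hτ
  have h1 : cv a v z - cv a v y = ∫ s, v s * (a (z - s) - a (y - s)) := by
    simp_rw [mul_sub]
    rw [integral_sub (cv_mul_integrable ha hca hv z) (cv_mul_integrable ha hca hv y)]
    rfl
  have h2 : ∀ s, s ∉ ball y (ρ + τ) → v s * (a (z - s) - a (y - s)) = 0 := by
    intro s hs
    rw [mem_ball_iff_norm, not_lt, norm_sub_rev] at hs
    have h3 : ‖y - s‖ ≤ ‖z - s‖ + ‖z - y‖ := by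
      have := norm_sub_le (z - s) (z - y)
      simpa using this
    rw [hsupp (y - s) (by linarith), hsupp (z - s) (by linarith)]; simp
  rw [h1, ← setIntegral_eq_integral_of_forall_compl_eq_zero h2, ← integral_const_mul]
  rw [← Real.norm_eq_abs]
  refine norm_integral_le_of_norm_le ((locInt_ball hv y _).norm.const_mul _)
    (Filter.Eventually.of_forall fun s => ?_)
  rw [norm_mul, mul_comm, Real.norm_eq_abs, Real.norm_eq_abs]
  refine mul_le_mul_of_nonneg_right ((hlip _ _).trans ?_) (abs_nonneg _)
  refine mul_le_mul_of_nonneg_left ?_ hΛ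
  simpa using hτ

lemma cv_abs {n : ℕ} {a v : EuclideanSpace ℝ (Fin n) → ℝ}
    (hv : LocallyIntegrable v) {ρ τ A : ℝ}
    (hsupp : ∀ z, ρ ≤ ‖z‖ → a z = 0) (hA : ∀ z, |a z| ≤ A)
    {y z : EuclideanSpace ℝ (Fin n)} (hτ : ‖z - y‖ ≤ τ) :
    |cv a v z| ≤ A * ∫ s in ball y (ρ + τ), |v s| := by
  have h2 : ∀ s, s ∉ ball y (ρ + τ) → v s * a (z - s) = 0 := by
    intro s hs
    rw [mem_ball_iff_norm, not_lt, norm_sub_rev] at hs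
    have h3 : ‖y - s‖ ≤ ‖z - s‖ + ‖z - y‖ := by
      have := norm_sub_le (z - s) (z - y)
      simpa using this
    rw [hsupp (z - s) (by linarith)]; simp
  rw [cv, ← setIntegral_eq_integral_of_forall_compl_eq_zero h2, ← integral_const_mul]
  rw [← Real.norm_eq_abs]
  refine norm_integral_le_of_norm_le ((locInt_ball hv y _).norm.const_mul _)
    (Filter.Eventually.of_forall fun s => ?_)
  rw [norm_mul, mul_comm, Real.norm_eq_abs, Real.norm_eq_abs]
  exact mul_le_mul_of_nonneg_right (hA _) (abs_nonneg _)

/-- Dyadic scales. -/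
def tk (k : ℕ) : ℝ := (1 / 2 : ℝ) ^ k

lemma tk_pos (k : ℕ) : 0 < tk k := by unfold tk; positivity

lemma tk_add (k i : ℕ) : tk (k + i) = tk k * tk i := by unfold tk; rw [pow_add]

lemma tk_succ (k : ℕ) : tk (k + 1) = tk k / 2 := by unfold tk; rw [pow_succ]; ring

lemma tk_le_one (k : ℕ) : tk k ≤ 1 := by
  unfold tk; exact pow_le_one₀ (by norm_num) (by norm_num)

lemma tk_anti {k i : ℕ} (h : k ≤ i) : tk i ≤ tk k := by
  unfold tk; exact pow_le_pow_of_le_one (by norm_num) (by norm_num) h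

lemma tk_tendsto : Filter.Tendsto tk Filter.atTop (nhds 0) := by
  unfold tk; exact tendsto_pow_atTop_nhds_zero_of_lt_one (by norm_num) (by norm_num)

/-- Standard properties of a dyadic approximate identity. -/
structure GoodKer (n : ℕ) (φ : ℕ → EuclideanSpace ℝ (Fin n) → ℝ) (A L : ℝ) : Prop where
  cont : ∀ k, Continuous (φ k)
  cs : ∀ k, HasCompactSupport (φ k)
  supp : ∀ k z, tk k ≤ ‖z‖ → φ k z = 0
  int : ∀ k, ∫ z, φ k z = 1
  L1 : ∀ k, ∫ z, |φ k z| ≤ L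
  bd : ∀ k z, |φ k z| ≤ A * (tk k)⁻¹ ^ n
  lip : ∀ k z z', |φ k z - φ k z'| ≤ A * (tk k)⁻¹ ^ (n + 1) * ‖z - z'‖
  A0 : 0 ≤ A
  L0 : 0 ≤ L

lemma step_lemma {n : ℕ} {φ : ℕ → EuclideanSpace ℝ (Fin n) → ℝ} {A L : ℝ} (hφ : GoodKer n φ A L)
    {v : ℕ → EuclideanSpace ℝ (Fin n) → ℝ} (hv : ∀ k, Continuous (v k))
    (hswap : ∀ i k, cv (φ k) (v i) = cv (φ i) (v k)) (k : ℕ) (y : EuclideanSpace ℝ (Fin n))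
    {δ : ℝ} (hδ : 0 < δ) :
    ∃ M : ℕ, tk k ^ (n + 1) * |v k y| ≤ 6 * (L * A) * ∑ i ∈ Finset.range M,
      tk (k + 2 + i) * (∫ z in ball y (5 / 4 * tk k), |v (k + 2 + i) z|) + δ := by
  have ht := tk_pos k
  have hA := hφ.A0
  have hL := hφ.L0
  have hvl : ∀ k, LocallyIntegrable (v k) := fun k => (hv k).locallyIntegrable
  set w : ℕ → EuclideanSpace ℝ (Fin n) → ℝ := fun I => cv (φ k) (v I) with hw
  have hwc : ∀ I, Continuous (w I) := fun I => cv_continuous (hφ.cont k) (hφ.cs k) (hvl I)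
  have hw2 : ∀ I, w I = cv (φ I) (v k) := fun I => hswap I k
  set N : ℕ → ℝ := fun I => ∫ z in ball y (5 / 4 * tk k), |v I z| with hN
  have hN0 : ∀ I, 0 ≤ N I := fun I => integral_nonneg fun _ => abs_nonneg _
  have htk2 : tk (k + 2) = tk k / 4 := by rw [tk_add]; norm_num [tk]; ring
  have hmono : ∀ I J, k + 2 ≤ I → ∫ z in ball y (tk k + tk I), |v J z| ≤ N J := by
    intro I J hI
    refine setIntegral_mono_set (locInt_ball (hvl J) y _).abs
      (Filter.Eventually.of_forall fun _ => abs_nonneg _) (LE.le.eventuallyLE (ball_subset_ball ?_))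
    have := tk_anti hI
    linarith
  have hcancel : tk k ^ (n + 1) * (tk k)⁻¹ ^ (n + 1) = 1 := by
    rw [← mul_pow, mul_inv_cancel₀ ht.ne', one_pow]
  have hcancel2 : tk k ^ (n + 1) * (tk k)⁻¹ ^ n = tk k := by
    rw [pow_succ, mul_right_comm, ← mul_pow, mul_inv_cancel₀ ht.ne', one_pow, one_mul]
  have hQ : ∀ I J, k + 2 ≤ I → tk k ^ (n + 1) * |cv (φ I) (w J) y - w J y| ≤ L * A * (tk I * N J) := by
    intro I J hI
    have h1 : |cv (φ I) (w J) y - w J y| ≤ L * ((A * (tk k)⁻¹ ^ (n + 1)) * tk I * N J) := by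
      refine cv_near (hφ.cont I) (hφ.cs I) (hwc J).locallyIntegrable (hφ.supp I) (hφ.int I) (hφ.L1 I) y
        ?_ fun z hz => ?_
      · have := hN0 J; have := tk_pos I; positivity
      · have h2 := cv_diff (hφ.cont k) (hφ.cs k) (hvl J) (Λ := A * (tk k)⁻¹ ^ (n + 1)) (by positivity)
          (hφ.supp k) (hφ.lip k) hz.le
        refine h2.trans (mul_le_mul_of_nonneg_left (hmono I J hI) ?_)
        have := tk_pos I; positivity
    calc tk k ^ (n + 1) * |cv (φ I) (w J) y - w J y| ≤
          tk k ^ (n + 1) * (L * ((A * (tk k)⁻¹ ^ (n + 1)) * tk I * N J)) := by gcongr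
      _ = (tk k ^ (n + 1) * (tk k)⁻¹ ^ (n + 1)) * (L * A * (tk I * N J)) := by ring
      _ = _ := by rw [hcancel, one_mul]
  set T : ℕ → ℝ := fun I => cv (φ I) (w I) y with hT
  have hT0 : tk k ^ (n + 1) * |T (k + 2)| ≤ 4 * (L * A) * (tk (k + 2) * N (k + 2)) := by
    have h1 : |T (k + 2)| ≤ L * ((A * (tk k)⁻¹ ^ n) * N (k + 2)) := by
      refine cv_bound (hφ.cont _) (hφ.cs _) (hφ.supp _) (hφ.L1 _) y ?_ fun z hz => ?_
      · have := hN0 (k + 2); positivity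
      · have h2 := cv_abs (hvl (k + 2)) (hφ.supp k) (hφ.bd k) hz.le
        exact h2.trans (mul_le_mul_of_nonneg_left (hmono _ _ le_rfl) (by positivity))
    calc tk k ^ (n + 1) * |T (k + 2)| ≤
          tk k ^ (n + 1) * (L * ((A * (tk k)⁻¹ ^ n) * N (k + 2))) := by gcongr
      _ = (tk k ^ (n + 1) * (tk k)⁻¹ ^ n) * (L * A * N (k + 2)) := by ring
      _ = _ := by rw [hcancel2, htk2]; ring
  have hX : ∀ I, cv (φ I) (w (I + 1)) = cv (φ (I + 1)) (w I) := by
    intro I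
    rw [hw2, hw2, cv_comm (hφ.cont _) (hφ.cs _) (hφ.cont _) (hφ.cs _) (hvl k)]
  have hTs : ∀ I, k + 2 ≤ I → tk k ^ (n + 1) * |T (I + 1) - T I| ≤
      L * A * (3 * (tk (I + 1) * N (I + 1)) + 2 * (tk I * N I)) := by
    intro I hI
    have q1 := hQ (I + 1) (I + 1) (by omega)
    have q2 := hQ I (I + 1) hI
    have q3 := hQ (I + 1) I (by omega)
    have q4 := hQ I I hI
    have hx := congrFun (hX I) y
    have h1 : |T (I + 1) - T I| ≤ |cv (φ (I + 1)) (w (I + 1)) y - w (I + 1) y| +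
        |cv (φ I) (w (I + 1)) y - w (I + 1) y| + |cv (φ (I + 1)) (w I) y - w I y| +
        |cv (φ I) (w I) y - w I y| := by
      have e : T (I + 1) - T I = (cv (φ (I + 1)) (w (I + 1)) y - w (I + 1) y) -
        (cv (φ I) (w (I + 1)) y - w (I + 1) y) + (cv (φ (I + 1)) (w I) y - w I y) -
        (cv (φ I) (w I) y - w I y) := by
        rw [hx]; simp only [hT]; ring
      rw [e]
      refine (abs_sub _ _).trans (add_le_add_left ((abs_add_le _ _).trans (add_le_add_left (abs_sub _ _) _)) _)
    have hp : 0 ≤ tk k ^ (n + 1) := by positivity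
    have h2 := mul_le_mul_of_nonneg_left h1 hp
    have hs : tk I = 2 * tk (I + 1) := by rw [tk_succ]; ring
    have hz : 0 ≤ L * A * (tk (I + 1) * N I) := by
      have := hN0 I; have := tk_pos (I + 1); positivity
    rw [hs] at q2 q4 ⊢
    nlinarith [h2, q1, q2, q3, q4, hz]
  have hind : ∀ i, tk k ^ (n + 1) * |T (k + 2 + i)| ≤ L * A * (6 * (∑ j ∈ Finset.range i,
      tk (k + 2 + j) * N (k + 2 + j)) + 4 * (tk (k + 2 + i) * N (k + 2 + i))) := by
    intro i
    induction i with
    | zero => simp only [Finset.range_zero, Finset.sum_empty, add_zero, mul_zero, zero_add]; linarith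
    | succ i ih =>
      have h1 := hTs (k + 2 + i) (by omega)
      have h2 : |T (k + 2 + (i + 1))| ≤ |T (k + 2 + i + 1) - T (k + 2 + i)| + |T (k + 2 + i)| := by
        rw [← add_assoc]
        have := abs_add_le (T (k + 2 + i + 1) - T (k + 2 + i)) (T (k + 2 + i))
        simpa using this
      have hp : 0 ≤ tk k ^ (n + 1) := by positivity
      have h3 := mul_le_mul_of_nonneg_left h2 hp
      rw [Finset.sum_range_succ]
      have e : k + 2 + (i + 1) = k + 2 + i + 1 := by ring
      rw [e] at h3 ⊢
      have hz : 0 ≤ L * A * (tk (k + 2 + i + 1) * N (k + 2 + i + 1)) := by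
        have := hN0 (k + 2 + i + 1); have := tk_pos (k + 2 + i + 1); positivity
      nlinarith [h1, h3, ih, hz]
  -- convergence
  set δ' : ℝ := δ / (tk k ^ (n + 1) * (L * L) + 1) with hδ'
  have hδ'0 : 0 < δ' := by positivity
  obtain ⟨ρ, hρ, hρc⟩ := Metric.continuous_iff.1 (hv k) y δ' hδ'0
  obtain ⟨I0, hI0⟩ := (tk_tendsto.eventually (gt_mem_nhds (show (0:ℝ) < ρ / 2 by positivity))).exists
  have hI : tk (k + 2 + I0) < ρ / 2 := lt_of_le_of_lt (tk_anti (by omega)) hI0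
  have hconv : |T (k + 2 + I0) - v k y| ≤ L * (L * δ') := by
    simp only [hT]
    rw [hw2]
    refine cv_near (hφ.cont _) (hφ.cs _) (cv_continuous (hφ.cont _) (hφ.cs _) (hvl k)).locallyIntegrable
      (hφ.supp _) (hφ.int _) (hφ.L1 _) y (by positivity) fun z hz => ?_
    refine cv_near (hφ.cont _) (hφ.cs _) (hvl k) (hφ.supp _) (hφ.int _) (hφ.L1 _) z hδ'0.le fun z' hz' => ?_
    refine (hρc z' ?_).le
    rw [dist_eq_norm]
    have := norm_add_le (z' - z) (z - y)
    rw [sub_add_sub_cancel] at this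
    linarith
  refine ⟨I0 + 1, ?_⟩
  have h1 := hind I0
  rw [Finset.sum_range_succ]
  have hp : 0 ≤ tk k ^ (n + 1) := by positivity
  have h2 : |v k y| ≤ |T (k + 2 + I0)| + |T (k + 2 + I0) - v k y| := by
    have := abs_sub (T (k + 2 + I0)) (T (k + 2 + I0) - v k y)
    simpa using this
  have h3 := mul_le_mul_of_nonneg_left (h2.trans (add_le_add_right hconv _)) hp
  have h4 : tk k ^ (n + 1) * (L * (L * δ')) ≤ δ := by
    have : (tk k ^ (n + 1) * (L * L) + 1) * δ' = δ := by rw [hδ']; field_simp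
    nlinarith
  have hz : 0 ≤ L * A * (tk (k + 2 + I0) * N (k + 2 + I0)) := by
    have := hN0 (k + 2 + I0); have := tk_pos (k + 2 + I0); positivity
  nlinarith [h1, h3, h4, hz]

lemma core_lemma {n : ℕ} {r : ℝ} (hr : (n : ℝ) / (n + 1) < r) (hr1 : r < 1) {B : ℝ} (hB : 0 ≤ B) :
    ∃ C : ℝ, 0 < C ∧ ∀ v : ℕ → EuclideanSpace ℝ (Fin n) → ℝ, (∀ k, Continuous (v k)) →
      (∀ k y (δ : ℝ), 0 < δ → ∃ M : ℕ, tk k ^ (n + 1) * |v k y| ≤ B * ∑ i ∈ Finset.range M,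
        tk (k + 2 + i) * (∫ z in ball y (5 / 4 * tk k), |v (k + 2 + i) z|) + δ) →
      ∀ (x : EuclideanSpace ℝ (Fin n)) (l : ℕ) (K J : ℝ),
        (∀ k y, l ≤ k → ball y (2 * tk k) ⊆ ball x (2 * tk l) → tk k ^ (n + 1) * |v k y| ≤ K) →
        (∀ i, ∫ z in ball x (2 * tk l), |v i z| ^ r ≤ J) →
        |v l x| ^ r ≤ C * (tk l)⁻¹ ^ n * J := by
  have hr0 : 0 < r := lt_of_le_of_lt (by positivity) hr
  have hn1 : (0:ℝ) < n + 1 := by positivity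
  set ε : ℝ := 1 - (n + 1) * (1 - r) with hε
  have hε0 : 0 < ε := by
    rw [div_lt_iff₀ hn1] at hr
    rw [hε]; nlinarith
  set b : ℝ := (1 / 2 : ℝ) ^ ε with hb
  have hb0 : 0 < b := by positivity
  have hb1 : b < 1 := Real.rpow_lt_one (by norm_num) (by norm_num) hε0
  have htb : ∀ i, tk i ^ ε = b ^ i := by
    intro i
    rw [tk, hb, ← Real.rpow_natCast, ← Real.rpow_natCast, ← Real.rpow_mul (by norm_num),
      ← Real.rpow_mul (by norm_num), mul_comm]
  have h1b : 0 < 1 - b := by linarith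
  refine ⟨B / (1 - b) + 1, by positivity, ?_⟩
  intro v hv hstep x l K J hK hJ
  have hJ0 : 0 ≤ J := (integral_nonneg fun z => by positivity).trans (hJ 0)
  set Ad : Set ℝ := {s | ∃ k y, l ≤ k ∧ ball y (2 * tk k) ⊆ ball x (2 * tk l) ∧
    s = tk k ^ (n + 1) * |v k y|} with hAd
  set S := sSup Ad with hS
  have hbdd : BddAbove Ad := ⟨K, by rintro s ⟨k, y, h1, h2, rfl⟩; exact hK k y h1 h2⟩
  have hle : ∀ k y, l ≤ k → ball y (2 * tk k) ⊆ ball x (2 * tk l) → tk k ^ (n + 1) * |v k y| ≤ S :=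
    fun k y h1 h2 => le_csSup hbdd ⟨k, y, h1, h2, rfl⟩
  have hlx := hle l x le_rfl Subset.rfl
  have hne : Ad.Nonempty := ⟨_, l, x, le_rfl, Subset.rfl, rfl⟩
  have htl := tk_pos l
  have hS0 : 0 ≤ S := le_trans (by positivity) hlx
  have hmain : S ≤ B / (1 - b) * (S ^ (1 - r) * J * b ^ l) := by
    refine csSup_le hne ?_
    rintro s ⟨k, y, hlk, hky, rfl⟩
    refine le_of_forall_pos_le_add fun δ hδ => ?_
    obtain ⟨M, hM⟩ := hstep k y δ hδ
    refine hM.trans (add_le_add_left ?_ δ)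
    have hterm : ∀ i, tk (k + 2 + i) * (∫ z in ball y (5 / 4 * tk k), |v (k + 2 + i) z|) ≤
        (S ^ (1 - r) * J * b ^ l) * b ^ i := by
      intro i
      set I := k + 2 + i with hI
      have hI0 := tk_pos I
      have htI : tk I ≤ tk k / 4 := by
        have h1 : tk I ≤ tk (k + 2) := tk_anti (by omega)
        have h2 : tk (k + 2) = tk k / 4 := by rw [tk_add]; norm_num [tk]; ring
        linarith
      have hkp := tk_pos k
      have hpt : ∀ z ∈ ball y (5 / 4 * tk k), |v I z| ≤ (S * (tk I)⁻¹ ^ (n + 1)) ^ (1 - r) * |v I z| ^ r := by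
        intro z hz
        have h1 := hle I z (by omega) (Subset.trans (ball_subset_ball' (by
          rw [mem_ball] at hz; linarith)) hky)
        have h2 : |v I z| ≤ S * (tk I)⁻¹ ^ (n + 1) := by
          rw [inv_pow, ← div_eq_mul_inv, le_div_iff₀ (by positivity)]; linarith
        rcases (abs_nonneg (v I z)).eq_or_lt with h0 | h0
        · rw [← h0, Real.zero_rpow hr0.ne']; simp
        · calc |v I z| = |v I z| ^ (1 - r) * |v I z| ^ r := by
                rw [← Real.rpow_add h0]; simp
            _ ≤ _ := by
                gcongr
      have hci : Continuous fun z => |v I z| ^ r := (hv I).abs.rpow_const fun _ => Or.inr hr0.le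
      have hint : ∫ z in ball y (5 / 4 * tk k), |v I z| ≤ (S * (tk I)⁻¹ ^ (n + 1)) ^ (1 - r) * J := by
        calc ∫ z in ball y (5 / 4 * tk k), |v I z|
            ≤ ∫ z in ball y (5 / 4 * tk k), (S * (tk I)⁻¹ ^ (n + 1)) ^ (1 - r) * |v I z| ^ r :=
              setIntegral_mono_on (locInt_ball (hv I).locallyIntegrable y _).abs
                ((locInt_ball hci.locallyIntegrable y _).const_mul _) measurableSet_ball hpt
          _ = (S * (tk I)⁻¹ ^ (n + 1)) ^ (1 - r) * ∫ z in ball y (5 / 4 * tk k), |v I z| ^ r :=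
              integral_const_mul _ _
          _ ≤ (S * (tk I)⁻¹ ^ (n + 1)) ^ (1 - r) * J := by
              gcongr
              refine le_trans ?_ (hJ I)
              refine setIntegral_mono_set (locInt_ball hci.locallyIntegrable x _)
                (Filter.Eventually.of_forall fun _ => by positivity) (LE.le.eventuallyLE ?_)
              exact Subset.trans (ball_subset_ball (by linarith)) hky
      have hpow : tk I * (S * (tk I)⁻¹ ^ (n + 1)) ^ (1 - r) = S ^ (1 - r) * b ^ I := by
        rw [Real.mul_rpow hS0 (by positivity), ← htb, mul_left_comm]
        congr 1
        rw [← Real.rpow_natCast, Real.inv_rpow hI0.le, ← Real.rpow_neg hI0.le, ← Real.rpow_mul hI0.le]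
        nth_rewrite 1 [← Real.rpow_one (tk I)]
        rw [← Real.rpow_add hI0, hε]
        congr 1
        push_cast; ring
      calc tk I * (∫ z in ball y (5 / 4 * tk k), |v I z|)
          ≤ tk I * ((S * (tk I)⁻¹ ^ (n + 1)) ^ (1 - r) * J) := by gcongr
        _ = S ^ (1 - r) * J * b ^ I := by rw [← mul_assoc, hpow]; ring
        _ ≤ S ^ (1 - r) * J * (b ^ (l + i)) := by
            gcongr ?_ * ?_
            exact pow_le_pow_of_le_one hb0.le hb1.le (by omega)
        _ = _ := by rw [pow_add]; ring
    have hgeom : ∑ i ∈ Finset.range M, b ^ i ≤ 1 / (1 - b) := by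
      rw [one_div, ← tsum_geometric_of_lt_one hb0.le hb1]
      exact (summable_geometric_of_lt_one hb0.le hb1).sum_le_tsum _ fun _ _ => by positivity
    calc B * ∑ i ∈ Finset.range M, tk (k + 2 + i) * (∫ z in ball y (5 / 4 * tk k), |v (k + 2 + i) z|)
        ≤ B * ∑ i ∈ Finset.range M, (S ^ (1 - r) * J * b ^ l) * b ^ i := by
          exact mul_le_mul_of_nonneg_left (Finset.sum_le_sum fun i _ => hterm i) hB
      _ = B * ((S ^ (1 - r) * J * b ^ l) * ∑ i ∈ Finset.range M, b ^ i) := by rw [← Finset.mul_sum]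
      _ ≤ B * ((S ^ (1 - r) * J * b ^ l) * (1 / (1 - b))) := by gcongr
      _ = _ := by ring
  rcases hS0.eq_or_lt with h0 | h0
  · have : |v l x| = 0 := by
      rw [← h0] at hlx
      have h1 : 0 < tk l ^ (n + 1) := by positivity
      nlinarith [abs_nonneg (v l x)]
    rw [this, Real.zero_rpow hr0.ne']; positivity
  have hSr : S ^ r ≤ B / (1 - b) * (J * b ^ l) := by
    have h1 : S = S ^ (1 - r) * S ^ r := by rw [← Real.rpow_add h0]; simp
    have h2 : 0 < S ^ (1 - r) := by positivity
    refine le_of_mul_le_mul_left ?_ h2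
    rw [← h1]; refine hmain.trans (le_of_eq (by ring))
  have h3 : (tk l ^ (n + 1)) ^ r * |v l x| ^ r ≤ (B / (1 - b) + 1) * (J * b ^ l) := by
    rw [← Real.mul_rpow (by positivity) (abs_nonneg _)]
    refine (Real.rpow_le_rpow (by positivity) hlx hr0.le).trans (hSr.trans ?_)
    have : 0 ≤ J * b ^ l := by positivity
    nlinarith
  have h4 : (tk l ^ (n + 1)) ^ r * (tk l)⁻¹ ^ n = b ^ l := by
    rw [← htb, ← Real.rpow_natCast, ← Real.rpow_natCast, Real.inv_rpow htl.le, ← Real.rpow_neg htl.le,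
      ← Real.rpow_mul htl.le, ← Real.rpow_add htl, hε]
    congr 1
    push_cast; ring
  have h5 : 0 < (tk l ^ (n + 1)) ^ r := by positivity
  refine le_of_mul_le_mul_left ?_ h5
  refine h3.trans (le_of_eq ?_)
  rw [← h4]; ring

/-- Dyadic mollifiers. -/
def mol {n : ℕ} (ψ : EuclideanSpace ℝ (Fin n) → ℝ) (k : ℕ) (z : EuclideanSpace ℝ (Fin n)) : ℝ :=
  (tk k)⁻¹ ^ n * ψ ((tk k)⁻¹ • z)

lemma mol_contDiff {n : ℕ} {ψ : EuclideanSpace ℝ (Fin n) → ℝ} (hψ : ContDiff ℝ (⊤ : ℕ∞) ψ) (k : ℕ) :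
    ContDiff ℝ 1 (mol ψ k) := by
  have : ContDiff ℝ 1 ψ := hψ.of_le (by norm_cast)
  unfold mol
  exact contDiff_const.mul (this.comp (contDiff_const_smul _))

lemma mol_fderiv {n : ℕ} {ψ : EuclideanSpace ℝ (Fin n) → ℝ} (hψ : ContDiff ℝ (⊤ : ℕ∞) ψ) (k : ℕ)
    (z e : EuclideanSpace ℝ (Fin n)) :
    fderiv ℝ (mol ψ k) z e = (tk k)⁻¹ ^ (n + 1) * fderiv ℝ ψ ((tk k)⁻¹ • z) e := by
  have h1 : HasFDerivAt ψ (fderiv ℝ ψ ((tk k)⁻¹ • z)) ((tk k)⁻¹ • z) :=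
    ((hψ.differentiable (by simp)) _).hasFDerivAt
  have h2 : HasFDerivAt (fun z : EuclideanSpace ℝ (Fin n) => (tk k)⁻¹ • z)
      ((tk k)⁻¹ • ContinuousLinearMap.id ℝ (EuclideanSpace ℝ (Fin n))) z :=
    (hasFDerivAt_id (𝕜 := ℝ) z).const_smul (tk k)⁻¹
  have h3 : HasFDerivAt (mol ψ k) _ z := (h1.comp z h2).const_mul ((tk k)⁻¹ ^ n)
  rw [h3.fderiv]
  simp
  ring

lemma smul_norm_ge {n : ℕ} {k : ℕ} {z : EuclideanSpace ℝ (Fin n)} (hz : tk k ≤ ‖z‖) :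
    1 ≤ ‖(tk k)⁻¹ • z‖ := by
  have := tk_pos k
  rw [norm_smul, Real.norm_of_nonneg (by positivity), inv_mul_eq_div, one_le_div this]
  exact hz

lemma mol_good {n : ℕ} {ψ : EuclideanSpace ℝ (Fin n) → ℝ} (hψ : ContDiff ℝ (⊤ : ℕ∞) ψ)
    (hψsupp : tsupport ψ ⊆ ball 0 1) (hψint : ∫ x, ψ x = 1) {M : ℝ} (hM : 0 < M)
    (hM1 : ∀ z, ‖fderiv ℝ ψ z‖ ≤ M) (hM2 : ∀ z, |ψ z| ≤ M) :
    GoodKer n (mol ψ) M (∫ z, |ψ z|) := by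
  have hs : ∀ k z, tk k ≤ ‖z‖ → mol ψ k z = 0 := fun k z hz => by
    rw [mol, psi_eq_zero_of_supp hψsupp (smul_norm_ge hz), mul_zero]
  have hint : ∀ (h : EuclideanSpace ℝ (Fin n) → ℝ) k, ∫ z, (tk k)⁻¹ ^ n * h ((tk k)⁻¹ • z) = ∫ z, h z := by
    intro h k
    have ht := tk_pos k
    rw [integral_const_mul, Measure.integral_comp_smul, finrank_euclideanSpace_fin,
      abs_of_nonneg (by positivity), smul_eq_mul, ← mul_assoc, mul_inv_cancel₀ (by positivity), one_mul]
  refine ⟨fun k => (mol_contDiff hψ k).continuous, fun k => ?_, hs, fun k => ?_, fun k => ?_, ?_, ?_, hM.le,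
    integral_nonneg fun _ => abs_nonneg _⟩
  · refine HasCompactSupport.intro (isCompact_closedBall (0 : EuclideanSpace ℝ (Fin n)) (tk k)) fun z hz => hs k z ?_
    rw [mem_closedBall_zero_iff, not_le] at hz; exact hz.le
  · rw [← hψint, ← hint ψ k]; rfl
  · rw [← hint (fun z => |ψ z|) k]
    refine le_of_eq (integral_congr_ae (Filter.Eventually.of_forall fun z => ?_))
    have ht := tk_pos k
    simp only [mol]
    rw [abs_mul, abs_of_nonneg (by positivity)]
  · intro k z
    have ht := tk_pos k
    rw [mol, abs_mul, abs_of_nonneg (by positivity), mul_comm]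
    gcongr; exact hM2 _
  · intro k z z'
    have ht := tk_pos k
    have h1 := convex_univ.norm_image_sub_le_of_norm_fderiv_le (𝕜 := ℝ)
      (fun x _ => (hψ.differentiable (by simp)) x) (fun x _ => hM1 x)
      (mem_univ ((tk k)⁻¹ • z')) (mem_univ ((tk k)⁻¹ • z))
    rw [← smul_sub, norm_smul, Real.norm_eq_abs, Real.norm_eq_abs, abs_of_nonneg (by positivity : 0 ≤ (tk k)⁻¹)] at h1
    rw [mol, mol, ← mul_sub, abs_mul, abs_of_nonneg (by positivity)]
    calc _ ≤ (tk k)⁻¹ ^ n * (M * ((tk k)⁻¹ * ‖z - z'‖)) := by gcongr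
      _ = _ := by ring

/-- Mollified derivative. -/
def vk {n : ℕ} (ψ f : EuclideanSpace ℝ (Fin n) → ℝ) (j : Fin n) (k : ℕ) : EuclideanSpace ℝ (Fin n) → ℝ :=
  cv (fun z => fderiv ℝ (mol ψ k) z (EuclideanSpace.single j 1)) f

lemma vk_eq {n : ℕ} {ψ : EuclideanSpace ℝ (Fin n) → ℝ} (hψ : ContDiff ℝ (⊤ : ℕ∞) ψ)
    (f : EuclideanSpace ℝ (Fin n) → ℝ) (j : Fin n) (k : ℕ) (x : EuclideanSpace ℝ (Fin n)) :
    vk ψ f j k x = (tk k)⁻¹ ^ (n + 1) *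
      ∫ y, f y * fderiv ℝ ψ ((tk k)⁻¹ • (x - y)) (EuclideanSpace.single j 1) := by
  rw [vk, cv, ← integral_const_mul]
  refine integral_congr_ae (Filter.Eventually.of_forall fun y => ?_)
  simp only
  rw [mol_fderiv hψ]; ring

lemma vk_le_max {n : ℕ} {ψ : EuclideanSpace ℝ (Fin n) → ℝ} (hψ : ContDiff ℝ (⊤ : ℕ∞) ψ)
    (f : EuclideanSpace ℝ (Fin n) → ℝ) (j : Fin n) (k : ℕ) (x : EuclideanSpace ℝ (Fin n)) :
    ENNReal.ofReal |vk ψ f j k x| ≤ truncSmoothMax n ψ f j x := by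
  have ht := tk_pos k
  rw [vk_eq hψ, abs_mul, abs_of_nonneg (by positivity)]
  exact le_iSup (fun t : {s : ℝ // 0 < s ∧ s ≤ 1} => ENNReal.ofReal ((t.1⁻¹) ^ (n + 1) *
      |∫ y, f y * fderiv ℝ ψ (t.1⁻¹ • (x - y)) (EuclideanSpace.single j 1)|)) ⟨tk k, ht, tk_le_one k⟩

lemma truncSmoothMax_measurable {n : ℕ} {ψ : EuclideanSpace ℝ (Fin n) → ℝ} (hψ : ContDiff ℝ (⊤ : ℕ∞) ψ)
    (hψsupp : tsupport ψ ⊆ ball 0 1)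
    {f : EuclideanSpace ℝ (Fin n) → ℝ} (hf : LocallyIntegrable f) (j : Fin n) :
    Measurable (truncSmoothMax n ψ f j) := by
  refine LowerSemicontinuous.measurable ?_
  refine lowerSemicontinuous_iSup fun t => Continuous.lowerSemicontinuous ?_
  obtain ⟨t, ht0, ht1⟩ := t
  simp only
  have h1 : Continuous fun z => fderiv ℝ ψ (t⁻¹ • z) (EuclideanSpace.single j 1) :=
    ((hψ.continuous_fderiv (by simp)).comp (by fun_prop)).clm_apply continuous_const
  have h2 : HasCompactSupport fun z => fderiv ℝ ψ (t⁻¹ • z) (EuclideanSpace.single j 1) := by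
    refine HasCompactSupport.intro (isCompact_closedBall (0 : EuclideanSpace ℝ (Fin n)) t) fun z hz => ?_
    rw [mem_closedBall_zero_iff, not_le] at hz
    rw [fderiv_eq_zero_of_supp hψsupp]; · simp
    rw [norm_smul, Real.norm_of_nonneg (by positivity), inv_mul_eq_div, one_le_div ht0]; exact hz.le
  have h3 := cv_continuous h1 h2 hf
  exact ENNReal.continuous_ofReal.comp (continuous_const.mul h3.abs)

lemma main_bound {n : ℕ} (hn : 1 ≤ n) {r : ℝ} (hr : (n : ℝ) / (n + 1) < r) (hr1 : r < 1)
    {ψ : EuclideanSpace ℝ (Fin n) → ℝ} (hψ : ContDiff ℝ (⊤ : ℕ∞) ψ)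
    (hψsupp : tsupport ψ ⊆ ball 0 1) (hψint : ∫ x, ψ x = 1) :
    ∃ C : ℝ, 0 < C ∧ ∀ f : EuclideanSpace ℝ (Fin n) → ℝ, LocallyIntegrable f → ∀ (j : Fin n) (k : ℕ)
      (x z : EuclideanSpace ℝ (Fin n)), ‖z - x‖ ≤ 4 * tk k →
      HLMax n (fun y => truncSmoothMax n ψ f j y ^ r) x ≠ ⊤ →
      |vk ψ f j k z| ≤ C * ((HLMax n (fun y => truncSmoothMax n ψ f j y ^ r) x) ^ (1 / r)).toReal := by
  have hr0 : 0 < r := lt_of_le_of_lt (by positivity) hr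
  obtain ⟨M, hM, hM1, hM2⟩ := exists_fderiv_bound hψ hψsupp
  have hG := mol_good hψ hψsupp hψint hM hM1 hM2
  obtain ⟨C, hC, H⟩ := core_lemma hr hr1 (B := 6 * ((∫ z, |ψ z|) * M))
    (by have := hG.L0; positivity)
  set V := (volume (ball (0 : EuclideanSpace ℝ (Fin n)) 1)).toReal with hV
  have hV0 : 0 < V := ENNReal.toReal_pos (measure_ball_pos _ _ one_pos).ne' measure_ball_lt_top.ne
  refine ⟨(C * 5 ^ n * V) ^ (1 / r), by positivity, ?_⟩
  intro f hf j k x z hz hfin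
  have hdc : ∀ i, Continuous fun z => fderiv ℝ (mol ψ i) z (EuclideanSpace.single j 1) := fun i =>
    ((mol_contDiff hψ i).continuous_fderiv one_ne_zero).clm_apply continuous_const
  have hvc : ∀ i, Continuous (vk ψ f j i) := fun i =>
    cv_continuous (hdc i) ((hG.cs i).fderiv_apply ℝ _) hf
  set HX := HLMax n (fun y => truncSmoothMax n ψ f j y ^ r) x with hHX
  have htk := tk_pos k
  set J := (volume (ball z (5 * tk k)) * HX) with hJ
  have hJt : J ≠ ⊤ := ENNReal.mul_ne_top measure_ball_lt_top.ne hfin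
  have h1 := H (vk ψ f j) hvc
    (fun i y δ hδ => step_lemma hG hvc (fun i i' => cv_deriv_swap (mol_contDiff hψ _) (hG.cs _)
      (mol_contDiff hψ _) (hG.cs _) hf _) i y hδ) z k (M * ∫ y in ball z (2 * tk k), |f y|) J.toReal ?_ ?_
  · have hJe : J.toReal = (5 * tk k) ^ n * V * HX.toReal := by
      rw [hJ, ENNReal.toReal_mul, volume_ball_scale z (by positivity), ENNReal.toReal_mul,
        ENNReal.toReal_ofReal (by positivity)]
    have h2 : |vk ψ f j k z| ^ r ≤ (C * 5 ^ n * V) * HX.toReal := by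
      refine h1.trans (le_of_eq ?_)
      rw [hJe, mul_pow]
      have : (tk k)⁻¹ ^ n * tk k ^ n = 1 := by rw [← mul_pow, inv_mul_cancel₀ htk.ne', one_pow]
      calc _ = ((tk k)⁻¹ ^ n * tk k ^ n) * (C * 5 ^ n * V * HX.toReal) := by ring
        _ = _ := by rw [this, one_mul]
    calc |vk ψ f j k z| = (|vk ψ f j k z| ^ r) ^ (1 / r) := by
          rw [← Real.rpow_mul (abs_nonneg _), mul_one_div_cancel hr0.ne', Real.rpow_one]
      _ ≤ ((C * 5 ^ n * V) * HX.toReal) ^ (1 / r) := by gcongr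
      _ = _ := by
          rw [Real.mul_rpow (by positivity) ENNReal.toReal_nonneg, ENNReal.toReal_rpow]
  · intro i y hki hsub
    have hti := tk_pos i
    have h3 := cv_abs (a := fun z => fderiv ℝ ψ ((tk i)⁻¹ • z) (EuclideanSpace.single j 1)) (v := f) (ρ := tk i)
      (τ := 0) (A := M) hf (fun z hz => by rw [fderiv_eq_zero_of_supp hψsupp (smul_norm_ge hz)]; simp)
      (fun z => by
        have h1 := (fderiv ℝ ψ ((tk i)⁻¹ • z)).le_opNorm (EuclideanSpace.single j 1)
        rw [norm_single_one, mul_one] at h1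
        exact h1.trans (hM1 _)) (y := y) (z := y) (by simp)
    rw [vk_eq hψ, abs_mul, abs_of_nonneg (by positivity : 0 ≤ (tk i)⁻¹ ^ (n + 1)), ← mul_assoc, ← mul_pow,
      mul_inv_cancel₀ hti.ne', one_pow, one_mul]
    refine h3.trans (mul_le_mul_of_nonneg_left ?_ hM.le)
    refine setIntegral_mono_set (locInt_ball hf z _).abs
      (Filter.Eventually.of_forall fun _ => abs_nonneg _) (LE.le.eventuallyLE ?_)
    exact Subset.trans (ball_subset_ball (by linarith)) hsub
  · intro i
    have hci : Continuous fun z => |vk ψ f j i z| ^ r := (hvc i).abs.rpow_const fun _ => Or.inr hr0.le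
    rw [integral_eq_lintegral_of_nonneg_ae (Filter.Eventually.of_forall fun _ => by positivity)
      hci.aestronglyMeasurable]
    refine ENNReal.toReal_mono hJt ?_
    have hxz : x ∈ ball z (5 * tk k) := by
      rw [mem_ball_iff_norm, norm_sub_rev]; linarith
    refine le_trans ?_ (setLIntegral_ball_le_HLMax (fun y => truncSmoothMax n ψ f j y ^ r) hxz)
    refine (lintegral_mono_set (ball_subset_ball (by linarith : 2 * tk k ≤ 5 * tk k))).trans ?_
    refine lintegral_mono fun y => ?_
    simp only
    rw [← ENNReal.ofReal_rpow_of_nonneg (abs_nonneg _) hr0.le]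
    gcongr
    exact vk_le_max hψ f j i y

lemma ae_tendsto_mol {n : ℕ} {ψ : EuclideanSpace ℝ (Fin n) → ℝ} (hψ : ContDiff ℝ (⊤ : ℕ∞) ψ)
    (hψsupp : tsupport ψ ⊆ ball 0 1) (hψint : ∫ x, ψ x = 1)
    {f : EuclideanSpace ℝ (Fin n) → ℝ} (hf : LocallyIntegrable f) :
    ∀ᵐ x, Filter.Tendsto (fun k => cv (mol ψ k) f x) Filter.atTop (nhds (f x)) := by
  obtain ⟨M, hM, hM1, hM2⟩ := exists_fderiv_bound hψ hψsupp
  have hG := mol_good hψ hψsupp hψint hM hM1 hM2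
  set V := (volume (ball (0 : EuclideanSpace ℝ (Fin n)) 1)).toReal with hV
  have hV0 : 0 < V := ENNReal.toReal_pos (measure_ball_pos _ _ one_pos).ne' measure_ball_lt_top.ne
  filter_upwards [IsUnifLocDoublingMeasure.ae_tendsto_average_norm_sub volume hf 1] with x hx
  have h1 := hx (l := Filter.atTop) (fun _ : ℕ => x) tk
    (tendsto_nhdsWithin_iff.2 ⟨tk_tendsto, Filter.Eventually.of_forall fun k => tk_pos k⟩)
    (Filter.Eventually.of_forall fun k => mem_closedBall_self (by have := tk_pos k; positivity))
  rw [tendsto_iff_norm_sub_tendsto_zero]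
  have h2 : Filter.Tendsto (fun k => (M * V) * ⨍ y in closedBall x (tk k), ‖f y - f x‖) Filter.atTop (nhds 0) := by
    simpa using h1.const_mul (M * V)
  refine squeeze_zero (fun _ => norm_nonneg _) (fun k => ?_) h2
  have ht := tk_pos k
  have hfc : LocallyIntegrable fun y => f y - f x := hf.sub (locallyIntegrable_const _)
  have h3 : cv (mol ψ k) f x - f x = cv (mol ψ k) (fun y => f y - f x) x := by
    simp only [cv, sub_mul]
    have hai : Integrable (mol ψ k) := (hG.cont k).integrable_of_hasCompactSupport (hG.cs k)
    rw [integral_sub (cv_mul_integrable (hG.cont k) (hG.cs k) hf x) ((hai.comp_sub_left x).const_mul _),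
      integral_const_mul, integral_sub_left_eq_self (mol ψ k) volume x, hG.int k, mul_one]
  have h4 := cv_abs (τ := 0) hfc (hG.supp k) (hG.bd k) (y := x) (z := x) (by simp)
  rw [h3, Real.norm_eq_abs]
  refine h4.trans ?_
  have h5 : volume.real (closedBall x (tk k)) = tk k ^ n * V := by
    rw [Measure.real, Measure.addHaar_closedBall _ x ht.le, finrank_euclideanSpace_fin,
      ENNReal.toReal_mul, ENNReal.toReal_ofReal (by positivity)]
  rw [setAverage_eq, h5, smul_eq_mul]
  have h6 : ∫ s in ball x (tk k + 0), |f s - f x| ≤ ∫ y in closedBall x (tk k), ‖f y - f x‖ := by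
    refine setIntegral_mono_set (hfc.integrableOn_isCompact (isCompact_closedBall _ _)).norm
      (Filter.Eventually.of_forall fun _ => abs_nonneg _) (LE.le.eventuallyLE ?_)
    rw [add_zero]; exact ball_subset_closedBall
  calc M * (tk k)⁻¹ ^ n * ∫ s in ball x (tk k + 0), |f s - f x|
      ≤ M * (tk k)⁻¹ ^ n * ∫ y in closedBall x (tk k), ‖f y - f x‖ :=
        mul_le_mul_of_nonneg_left h6 (by positivity)
    _ = _ := by rw [inv_pow]; field_simp

lemma norm_clm_le_sum {n : ℕ} (T : EuclideanSpace ℝ (Fin n) →L[ℝ] ℝ) :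
    ‖T‖ ≤ ∑ j : Fin n, |T (EuclideanSpace.single j 1)| := by
  refine T.opNorm_le_bound (Finset.sum_nonneg fun _ _ => abs_nonneg _) fun h => ?_
  have h1 : h = ∑ j : Fin n, h j • EuclideanSpace.single j (1:ℝ) := by
    ext i
    simp [Finset.sum_apply, Pi.single_apply]
  conv_lhs => rw [h1]
  rw [map_sum, Finset.sum_mul]
  refine (norm_sum_le _ _).trans (Finset.sum_le_sum fun j _ => ?_)
  rw [map_smul, norm_smul, mul_comm, Real.norm_eq_abs]
  exact mul_le_mul_of_nonneg_left (PiLp.norm_apply_le h j) (abs_nonneg _)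

lemma dir2_pointwise {n : ℕ} (hn : 1 ≤ n) {r : ℝ} (hr : (n : ℝ) / (n + 1) < r) (hr1 : r < 1)
    {ψ : EuclideanSpace ℝ (Fin n) → ℝ} (hψ : ContDiff ℝ (⊤ : ℕ∞) ψ)
    (hψsupp : tsupport ψ ⊆ ball 0 1) (hψint : ∫ x, ψ x = 1) :
    ∃ C : ℝ, 0 < C ∧ ∀ f : EuclideanSpace ℝ (Fin n) → ℝ, LocallyIntegrable f →
      (∀ j, ∀ᵐ x, HLMax n (fun y => truncSmoothMax n ψ f j y ^ r) x ≠ ⊤) →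
      IsLocalHajlaszGradient n f (fun x => C * ∑ j : Fin n,
        ((HLMax n (fun y => truncSmoothMax n ψ f j y ^ r) x) ^ (1 / r)).toReal) := by
  obtain ⟨C, hC, H⟩ := main_bound hn hr hr1 hψ hψsupp hψint
  obtain ⟨M, hM, hM1, hM2⟩ := exists_fderiv_bound hψ hψsupp
  have hG := mol_good hψ hψsupp hψint hM hM1 hM2
  set L := ∫ z, |ψ z| with hLdef
  have hL := hG.L0
  refine ⟨8 * L * C + C, by positivity, fun f hf hfin => ?_⟩
  set D : EuclideanSpace ℝ (Fin n) → ℝ := fun x => ∑ j : Fin n,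
        ((HLMax n (fun y => truncSmoothMax n ψ f j y ^ r) x) ^ (1 / r)).toReal with hD
  have hD0 : ∀ x, 0 ≤ D x := fun x => Finset.sum_nonneg fun _ _ => ENNReal.toReal_nonneg
  refine ⟨?_, fun x => mul_nonneg (by positivity) (hD0 x), ?_⟩
  · refine measurable_const.mul (Finset.measurable_sum _ fun j _ => ?_)
    exact ((measurable_HLMax n _).pow_const _).ennreal_toReal
  have hae : ∀ᵐ x, (∀ j, HLMax n (fun y => truncSmoothMax n ψ f j y ^ r) x ≠ ⊤) ∧
      Filter.Tendsto (fun k => cv (mol ψ k) f x) Filter.atTop (nhds (f x)) :=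
    (ae_all_iff.2 hfin).and (ae_tendsto_mol hψ hψsupp hψint hf)
  set u : ℕ → EuclideanSpace ℝ (Fin n) → ℝ := fun k => cv (mol ψ k) f with hu
  have huc : ∀ k, Continuous (u k) := fun k => cv_continuous (hG.cont k) (hG.cs k) hf
  refine ⟨_, ae_iff.1 hae, ?_⟩
  have hlipx : ∀ x, (∀ j, HLMax n (fun y => truncSmoothMax n ψ f j y ^ r) x ≠ ⊤) → ∀ k z,
      ‖z - x‖ ≤ 4 * tk k → |u k z - u k x| ≤ C * D x * ‖z - x‖ := by
    intro x hx k z hz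
    have ht := tk_pos k
    refine (convex_closedBall x (4 * tk k)).norm_image_sub_le_of_norm_fderiv_le (𝕜 := ℝ)
      (fun z _ => (cv_hasFDerivAt (mol_contDiff hψ k) (hG.cs k) hf z).1) (fun z hz => ?_)
      (mem_closedBall_self (by positivity)) (mem_closedBall_iff_norm.2 hz)
    refine (norm_clm_le_sum _).trans ?_
    rw [hD, Finset.mul_sum]
    refine Finset.sum_le_sum fun j _ => ?_
    rw [(cv_hasFDerivAt (mol_contDiff hψ k) (hG.cs k) hf z).2]
    exact H f hf j k x z (mem_closedBall_iff_norm.1 hz) (hx j)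
  have hstep : ∀ x, (∀ j, HLMax n (fun y => truncSmoothMax n ψ f j y ^ r) x ≠ ⊤) → ∀ k,
      |u (k + 1) x - u k x| ≤ 2 * L * (C * D x) * tk k := by
    intro x hx k
    have ht := tk_pos k
    have hs := tk_succ k
    have hCD : 0 ≤ C * D x := mul_nonneg hC.le (hD0 x)
    have e : cv (mol ψ k) (u (k + 1)) = cv (mol ψ (k + 1)) (u k) :=
      cv_comm (hG.cont _) (hG.cs _) (hG.cont _) (hG.cs _) hf
    have h1 : |cv (mol ψ k) (u (k + 1)) x - u (k + 1) x| ≤ L * (C * D x * tk k) := by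
      refine cv_near (hG.cont _) (hG.cs _) (huc _).locallyIntegrable (hG.supp _) (hG.int _) (hG.L1 _) x
        (by positivity) fun z hz => ?_
      refine (hlipx x hx (k + 1) z (by linarith)).trans ?_
      gcongr
    have h2 : |cv (mol ψ (k + 1)) (u k) x - u k x| ≤ L * (C * D x * tk k) := by
      refine cv_near (hG.cont _) (hG.cs _) (huc _).locallyIntegrable (hG.supp _) (hG.int _) (hG.L1 _) x
        (by positivity) fun z hz => ?_
      refine (hlipx x hx k z (by linarith)).trans ?_
      gcongr
      linarith
    rw [← e] at h2
    have h3 := abs_sub (cv (mol ψ k) (u (k + 1)) x - u k x) (cv (mol ψ k) (u (k + 1)) x - u (k + 1) x)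
    have e3 : cv (mol ψ k) (u (k + 1)) x - u k x - (cv (mol ψ k) (u (k + 1)) x - u (k + 1) x) =
        u (k + 1) x - u k x := by ring
    rw [e3] at h3
    linarith
  have hlim : ∀ x, ((∀ j, HLMax n (fun y => truncSmoothMax n ψ f j y ^ r) x ≠ ⊤) ∧
      Filter.Tendsto (fun k => cv (mol ψ k) f x) Filter.atTop (nhds (f x))) → ∀ l,
      |f x - u l x| ≤ 4 * L * (C * D x) * tk l := by
    intro x ⟨hx, hxt⟩ l
    have hCD : 0 ≤ C * D x := mul_nonneg hC.le (hD0 x)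
    have hind : ∀ i, |u (i + l) x - u l x| ≤ 4 * L * (C * D x) * (tk l - tk (i + l)) := by
      intro i
      induction i with
      | zero => simp
      | succ i ih =>
        have h1 := hstep x hx (i + l)
        have h2 := abs_add_le (u (i + l + 1) x - u (i + l) x) (u (i + l) x - u l x)
        rw [sub_add_sub_cancel] at h2
        have e : i + 1 + l = i + l + 1 := by ring
        rw [e, tk_succ]
        nlinarith
    have h1 : Filter.Tendsto (fun i => |u (i + l) x - u l x|) Filter.atTop (nhds |f x - u l x|) :=
      (((Filter.tendsto_add_atTop_iff_nat l).2 hxt).sub_const _).abs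
    refine le_of_tendsto h1 (Filter.Eventually.of_forall fun i => (hind i).trans ?_)
    have := tk_pos (i + l)
    gcongr
    linarith
  intro x hx y hy hxy
  rw [mem_ofPred_eq, not_not] at hx hy
  rcases (norm_nonneg (x - y)).eq_or_lt with h0 | h0
  · have : x = y := by rw [← sub_eq_zero, ← norm_eq_zero]; exact h0.symm
    subst this; simp
  obtain ⟨l, hl1, hl2⟩ := exists_nat_pow_near_of_lt_one h0 hxy (y := (1 / 2 : ℝ)) (by norm_num) (by norm_num)
  have hl2' : ‖x - y‖ ≤ tk l := hl2
  have hl1' : tk l ≤ 2 * ‖x - y‖ := by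
    have h1 : tk (l + 1) < ‖x - y‖ := hl1
    rw [tk_succ] at h1; linarith
  have h1 := hlim x hx l
  have h2 := hlim y hy l
  have h3 := hlipx x hx.1 l y (by rw [norm_sub_rev]; have := tk_pos l; linarith)
  rw [norm_sub_rev] at h3
  have hDx := hD0 x
  have hDy := hD0 y
  have h4 : |f x - f y| ≤ |f x - u l x| + |u l y - u l x| + |f y - u l y| := by
    have e : f x - f y = (f x - u l x) - (u l y - u l x) - (f y - u l y) := by ring
    rw [e]
    exact (abs_sub _ _).trans (add_le_add_left (abs_sub _ _) _)
  have h5 : 4 * L * (C * D x) * tk l ≤ 4 * L * (C * D x) * (2 * ‖x - y‖) := by gcongr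
  have h6 : 4 * L * (C * D y) * tk l ≤ 4 * L * (C * D y) * (2 * ‖x - y‖) := by gcongr
  have h7 : 0 ≤ C * D y * ‖x - y‖ := by positivity
  nlinarith [h1, h2, h3, h4, h5, h6, h7]

lemma rpow_sum_le' {ι : Type*} (s : Finset ι) (a : ι → ℝ≥0∞) {p : ℝ} (hp0 : 0 < p) (hp : p ≤ 1) :
    (∑ i ∈ s, a i) ^ p ≤ ∑ i ∈ s, a i ^ p := by
  classical
  induction s using Finset.induction_on with
  | empty => simp [hp0]
  | insert i s hi ih =>
    rw [Finset.sum_insert hi, Finset.sum_insert hi]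
    exact (ENNReal.rpow_add_le_add_rpow _ _ hp0.le hp).trans (by gcongr)

lemma dir1_norm {n : ℕ} (hn : 1 ≤ n) {p : ℝ} (hp1 : (n : ℝ) / (n + 1) < p) (hp2 : p ≤ 1)
    {ψ : EuclideanSpace ℝ (Fin n) → ℝ} (hψ : ContDiff ℝ (⊤ : ℕ∞) ψ)
    (hψsupp : tsupport ψ ⊆ ball 0 1) :
    ∃ K : ℝ≥0∞, K ≠ ⊤ ∧ ∀ f g : EuclideanSpace ℝ (Fin n) → ℝ, LocallyIntegrable f →
      IsLocalHajlaszGradient n f g → ∀ j,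
        (∫⁻ x, truncSmoothMax n ψ f j x ^ p) ^ (1 / p) ≤ K * lpNorm n p g volume := by
  obtain ⟨q, hq1, hq2⟩ := exists_between hp1
  have hq0 : 0 < q := lt_of_le_of_lt (by positivity) hq1
  have hp0 : 0 < p := hq0.trans hq2
  obtain ⟨C, hC0, hCt, H⟩ := dir1_pointwise hn hq1.le (hq2.trans_le hp2) hψ hψsupp
  obtain ⟨Q, hQ, HQ⟩ := HLMax_quasi hn hq0 hq2
  refine ⟨C * Q, ENNReal.mul_ne_top hCt hQ, fun f g hf hg j => ?_⟩
  have hgm : Measurable fun x => ENNReal.ofReal (g x) := hg.1.ennreal_ofReal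
  have h1 := HQ _ hgm
  have h2 : lpNorm n p g volume = (∫⁻ x, ENNReal.ofReal (g x) ^ p) ^ (1 / p) := by
    rw [_root_.lpNorm]; simp_rw [abs_of_nonneg (hg.2.1 _)]
  rw [h2, mul_assoc]
  calc (∫⁻ x, truncSmoothMax n ψ f j x ^ p) ^ (1 / p)
      ≤ (∫⁻ x, (C * (HLMax n (fun y => ENNReal.ofReal (g y) ^ q) x) ^ (1 / q)) ^ p) ^ (1 / p) := by
        gcongr with x; exact H f g hf hg j x
    _ = (C ^ p * ∫⁻ x, ((HLMax n (fun y => ENNReal.ofReal (g y) ^ q) x) ^ (1 / q)) ^ p) ^ (1 / p) := by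
        simp_rw [ENNReal.mul_rpow_of_nonneg _ _ hp0.le]
        rw [lintegral_const_mul' _ _ (ENNReal.rpow_ne_top_of_nonneg hp0.le hCt)]
    _ = C * (∫⁻ x, ((HLMax n (fun y => ENNReal.ofReal (g y) ^ q) x) ^ (1 / q)) ^ p) ^ (1 / p) := by
        rw [ENNReal.mul_rpow_of_nonneg _ _ (by positivity), ← ENNReal.rpow_mul, mul_one_div_cancel hp0.ne',
          ENNReal.rpow_one]
    _ ≤ _ := by gcongr

lemma dir2_norm {n : ℕ} (hn : 1 ≤ n) {p : ℝ} (hp1 : (n : ℝ) / (n + 1) < p) (hp2 : p ≤ 1)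
    {ψ : EuclideanSpace ℝ (Fin n) → ℝ} (hψ : ContDiff ℝ (⊤ : ℕ∞) ψ)
    (hψsupp : tsupport ψ ⊆ ball 0 1) (hψint : ∫ x, ψ x = 1) :
    ∃ K : ℝ≥0∞, K ≠ ⊤ ∧ ∀ f : EuclideanSpace ℝ (Fin n) → ℝ, LocallyIntegrable f →
      (∀ j : Fin n, (∫⁻ x, truncSmoothMax n ψ f j x ^ p) ^ (1 / p) ≠ ⊤) →
      ∃ g, IsLocalHajlaszGradient n f g ∧ lpNorm n p g volume ≤
        K * ∑ j : Fin n, (∫⁻ x, truncSmoothMax n ψ f j x ^ p) ^ (1 / p) := by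
  obtain ⟨q, hq1, hq2⟩ := exists_between hp1
  have hq0 : 0 < q := lt_of_le_of_lt (by positivity) hq1
  have hp0 : 0 < p := hq0.trans hq2
  obtain ⟨C, hC, H⟩ := dir2_pointwise hn hq1 (hq2.trans_le hp2) hψ hψsupp hψint
  obtain ⟨Q, hQ, HQ⟩ := HLMax_quasi hn hq0 hq2
  refine ⟨ENNReal.ofReal C * ((n : ℝ≥0∞) ^ (1 / p) * Q), ENNReal.mul_ne_top (by simp) (ENNReal.mul_ne_top
    (ENNReal.rpow_ne_top_of_nonneg (by positivity) (by simp)) hQ), fun f hf hfin => ?_⟩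
  have hm := truncSmoothMax_measurable hψ hψsupp hf
  set T := ∑ j : Fin n, (∫⁻ x, truncSmoothMax n ψ f j x ^ p) ^ (1 / p) with hT
  set G : Fin n → EuclideanSpace ℝ (Fin n) → ℝ≥0∞ := fun j x =>
    (HLMax n (fun y => truncSmoothMax n ψ f j y ^ q) x) ^ (1 / q) with hG
  have hGm : ∀ j, Measurable (G j) := fun j => (measurable_HLMax n _).pow_const _
  have hGn : ∀ j, (∫⁻ x, G j x ^ p) ^ (1 / p) ≤ Q * (∫⁻ x, truncSmoothMax n ψ f j x ^ p) ^ (1 / p) :=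
    fun j => HQ _ (hm j)
  have hGi : ∀ j, ∫⁻ x, G j x ^ p ≠ ⊤ := by
    intro j hj
    have h1 := hGn j
    rw [hj, ENNReal.top_rpow_of_pos (by positivity), top_le_iff] at h1
    exact ENNReal.mul_ne_top hQ (hfin j) h1
  have hae : ∀ j, ∀ᵐ x, HLMax n (fun y => truncSmoothMax n ψ f j y ^ q) x ≠ ⊤ := by
    intro j
    filter_upwards [ae_lt_top ((hGm j).pow_const p) (hGi j)] with x hx htop
    simp only [hG, htop] at hx
    rw [ENNReal.top_rpow_of_pos (by positivity), ENNReal.top_rpow_of_pos hp0] at hx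
    exact lt_irrefl _ hx
  refine ⟨_, H f hf hae, ?_⟩
  have hI : ∀ j, ∫⁻ x, G j x ^ p ≤ (Q * T) ^ p := by
    intro j
    have h1 : (∫⁻ x, G j x ^ p) ^ (1 / p) ≤ Q * T :=
      (hGn j).trans (by
        gcongr
        exact Finset.single_le_sum (f := fun j => (∫⁻ x, truncSmoothMax n ψ f j x ^ p) ^ (1 / p))
          (fun _ _ => zero_le) (Finset.mem_univ j))
    calc ∫⁻ x, G j x ^ p = ((∫⁻ x, G j x ^ p) ^ (1 / p)) ^ p := by
          rw [← ENNReal.rpow_mul, one_div_mul_cancel hp0.ne', ENNReal.rpow_one]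
      _ ≤ _ := by gcongr
  rw [_root_.lpNorm]
  calc (∫⁻ x, ENNReal.ofReal |C * ∑ j : Fin n, (G j x).toReal| ^ p) ^ (1 / p)
      ≤ (∫⁻ x, ENNReal.ofReal C ^ p * ∑ j : Fin n, G j x ^ p) ^ (1 / p) := by
        gcongr with x
        rw [abs_of_nonneg (mul_nonneg hC.le (Finset.sum_nonneg fun _ _ => ENNReal.toReal_nonneg)),
          ENNReal.ofReal_mul hC.le, ENNReal.mul_rpow_of_nonneg _ _ hp0.le,
          ENNReal.ofReal_sum_of_nonneg fun _ _ => ENNReal.toReal_nonneg]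
        gcongr
        refine (rpow_sum_le' _ _ hp0 hp2).trans (Finset.sum_le_sum fun j _ => ?_)
        gcongr
        exact ENNReal.ofReal_toReal_le
    _ = (ENNReal.ofReal C ^ p * ∑ j : Fin n, ∫⁻ x, G j x ^ p) ^ (1 / p) := by
        rw [lintegral_const_mul' _ _ (ENNReal.rpow_ne_top_of_nonneg hp0.le (by simp)),
          lintegral_finsetSum _ fun j _ => (hGm j).pow_const p]
    _ ≤ (ENNReal.ofReal C ^ p * ∑ _j : Fin n, (Q * T) ^ p) ^ (1 / p) := by
        gcongr with j; exact hI j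
    _ = _ := by
        have e : ∀ a : ℝ≥0∞, (a ^ p) ^ (1 / p) = a := fun a => by
          rw [← ENNReal.rpow_mul, mul_one_div_cancel hp0.ne', ENNReal.rpow_one]
        rw [Finset.sum_const, Finset.card_univ, Fintype.card_fin, nsmul_eq_mul,
          ENNReal.mul_rpow_of_nonneg _ _ (by positivity), ENNReal.mul_rpow_of_nonneg _ _ (by positivity),
          e, e]
        ring

/-- **Theorem 3.2.** Pointwise characterization of the local Hardy–Sobolev space
`ḣ^{1,p}(ℝⁿ)`, `n/(n+1) < p ≤ 1`: a locally integrable `f` has a local Hajlasz gradient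
in `L^p` iff each truncated maximal function `m_ψ(D_j f)` lies in `L^p`, with
equivalence of (quasi)norms. -/
theorem local_hardy_sobolev_hajlasz_characterization
    (n : ℕ) (hn : 1 ≤ n) (p : ℝ) (hp1 : (n : ℝ) / (n + 1) < p) (hp2 : p ≤ 1)
    (ψ : EuclideanSpace ℝ (Fin n) → ℝ) (hψ : ContDiff ℝ (⊤ : ℕ∞) ψ)
    (hψsupp : tsupport ψ ⊆ ball 0 1) (hψint : ∫ x, ψ x = 1) :
    ∃ C : ℝ≥0∞, 1 ≤ C ∧ C ≠ ⊤ ∧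
      ∀ f : EuclideanSpace ℝ (Fin n) → ℝ, LocallyIntegrable f →
        (((∃ g, IsLocalHajlaszGradient n f g ∧ lpNorm n p g volume ≠ ⊤) ↔
            ∀ j : Fin n, (∫⁻ x, truncSmoothMax n ψ f j x ^ p) ^ (1 / p) ≠ ⊤) ∧
          C⁻¹ * ∑ j : Fin n, (∫⁻ x, truncSmoothMax n ψ f j x ^ p) ^ (1 / p) ≤
              sInf {r : ℝ≥0∞ | ∃ g, IsLocalHajlaszGradient n f g ∧
                r = lpNorm n p g volume} ∧
          sInf {r : ℝ≥0∞ | ∃ g, IsLocalHajlaszGradient n f g ∧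
                r = lpNorm n p g volume} ≤
              C * ∑ j : Fin n, (∫⁻ x, truncSmoothMax n ψ f j x ^ p) ^ (1 / p)) := by
  obtain ⟨K1, hK1, H1⟩ := dir1_norm hn hp1 hp2 hψ hψsupp
  obtain ⟨K2, hK2, H2⟩ := dir2_norm hn hp1 hp2 hψ hψsupp hψint
  have hC1 : (1 : ℝ≥0∞) ≤ 1 + n * K1 + K2 := by rw [add_assoc]; exact le_self_add
  have hCt : 1 + n * K1 + K2 ≠ ⊤ :=
    ENNReal.add_ne_top.2 ⟨ENNReal.add_ne_top.2 ⟨by simp, ENNReal.mul_ne_top (by simp) hK1⟩, hK2⟩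
  have hC0 : 1 + n * K1 + K2 ≠ 0 := (lt_of_lt_of_le one_pos hC1).ne'
  refine ⟨1 + n * K1 + K2, hC1, hCt, fun f hf => ⟨⟨?_, ?_⟩, ?_, ?_⟩⟩
  · rintro ⟨g, hg, hgt⟩ j
    exact ne_top_of_le_ne_top (ENNReal.mul_ne_top hK1 hgt) (H1 f g hf hg j)
  · intro hfin
    obtain ⟨g, hg, hgn⟩ := H2 f hf hfin
    exact ⟨g, hg, ne_top_of_le_ne_top (ENNReal.mul_ne_top hK2 (ENNReal.sum_ne_top.2 fun j _ => hfin j)) hgn⟩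
  · refine le_sInf ?_
    rintro r ⟨g, hg, rfl⟩
    rw [ENNReal.inv_mul_le_iff hC0 hCt]
    calc _ ≤ ∑ _j : Fin n, K1 * lpNorm n p g volume := Finset.sum_le_sum fun j _ => H1 f g hf hg j
      _ = (n * K1) * lpNorm n p g volume := by simp [mul_assoc]
      _ ≤ _ := by
        gcongr
        rw [add_right_comm, add_comm]; exact le_self_add
  · by_cases hfin : ∀ j : Fin n, (∫⁻ x, truncSmoothMax n ψ f j x ^ p) ^ (1 / p) ≠ ⊤
    · obtain ⟨g, hg, hgn⟩ := H2 f hf hfin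
      have hmem : lpNorm n p g volume ∈ {r : ℝ≥0∞ | ∃ g, IsLocalHajlaszGradient n f g ∧
          r = lpNorm n p g volume} := ⟨g, hg, rfl⟩
      refine (sInf_le hmem).trans (hgn.trans ?_)
      gcongr
      rw [add_comm]; exact le_self_add
    · push Not at hfin
      obtain ⟨j, hj⟩ := hfin
      have : ∑ j : Fin n, (∫⁻ x, truncSmoothMax n ψ f j x ^ p) ^ (1 / p) = ⊤ :=
        ENNReal.sum_eq_top.2 ⟨j, Finset.mem_univ j, hj⟩
      rw [this, ENNReal.mul_top hC0]; exact le_top
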